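/- Let Σ_A(ℕ) be a topologically mixing, finitely primitive (BIP) countable Markov shift, f : Σ_A(ℕ) → ℝ satisfying the Walters condition with Var_1 f < ∞ and P(f) < ∞, admitting a unique maximizing measure, and for β > 1 let μ_β be the Gibbs measure of βf. Then for every x = (x_0, x_1, x_2, …) ∈ Σ_A(ℕ): lim_{n→∞} lim_{β→∞} (1/β) log ( μ_β([x_1 … x_n]) / μ_β([x_0 … x_n]) ) = R_+(x), where R_+ = −f − V + V∘σ + m(f) for a bounded calibrated sub-action V. -/

import Mathlib

open Filter Topology MeasureTheory
open scoped ENNReal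

/-- The countable Markov shift over alphabet ℕ determined by the 0-1 matrix `A`. -/
def MarkovShift (A : ℕ → ℕ → Bool) : Type :=
  {x : ℕ → ℕ // ∀ i, A (x i) (x (i + 1)) = true}

namespace MarkovShift

variable {A : ℕ → ℕ → Bool}

instance : TopologicalSpace (MarkovShift A) :=
  instTopologicalSpaceSubtype

instance : MeasurableSpace (MarkovShift A) := borel _

instance : BorelSpace (MarkovShift A) := ⟨rfl⟩

/-- The shift map. -/
def shift (x : MarkovShift A) : MarkovShift A :=
  ⟨fun n => x.1 (n + 1), fun i => x.2 (i + 1)⟩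

/-- The cylinder set determined by a finite word. -/
def cylinder (w : List ℕ) : Set (MarkovShift A) :=
  {x | ∀ i : Fin w.length, x.1 i = w.get i}

/-- The cylinder set determined by the first `m` coordinates of `x`. -/
def cylOf (x : MarkovShift A) (m : ℕ) : Set (MarkovShift A) :=
  {y | ∀ i < m, y.1 i = x.1 i}

/-- A symbol is admissible when its cylinder is nonempty. -/
def Admissible (A : ℕ → ℕ → Bool) (a : ℕ) : Prop :=
  ∃ x : MarkovShift A, x.1 0 = a

/-- Topologically mixing. -/
def TopologicallyMixing (A : ℕ → ℕ → Bool) : Prop :=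
  ∀ a b : ℕ, Admissible A a → Admissible A b →
    ∃ N : ℕ, ∀ n ≥ N, ∃ x : MarkovShift A, x.1 0 = a ∧ (shift^[n] x).1 0 = b

/-- Finitely primitive (BIP). -/
def FinitelyPrimitive (A : ℕ → ℕ → Bool) : Prop :=
  ∃ (K₀ : ℕ) (F : Finset ℕ), ∀ a b : ℕ, Admissible A a → Admissible A b →
    ∃ w : List ℕ, w.length = K₀ ∧ (∀ c ∈ w, c ∈ F) ∧
      List.Chain' (fun u v => A u v = true) (a :: (w ++ [b]))

/-- First coordinate where two distinct points disagree. -/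
noncomputable def firstDiff (x y : MarkovShift A) (h : x ≠ y) : ℕ :=
  Nat.find (Function.ne_iff.mp (fun hxy : x.1 = y.1 => h (Subtype.ext hxy)))

open Classical in
/-- The metric `d(x,y) = r^{t(x,y)}`. -/
noncomputable def dist' (r : ℝ) (x y : MarkovShift A) : ℝ :=
  if h : x = y then 0 else r ^ firstDiff x y h

/-- Birkhoff sum `S_n f`. -/
def birkhoff (f : MarkovShift A → ℝ) (n : ℕ) (x : MarkovShift A) : ℝ :=
  ∑ j ∈ Finset.range n, f (shift^[j] x)

/-- The set of values `|S_n f x - S_n f y|` over pairs agreeing on the first `m` coordinates. -/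
def varSet (f : MarkovShift A → ℝ) (n m : ℕ) : Set ℝ :=
  {c | ∃ x y : MarkovShift A, (∀ i < m, x.1 i = y.1 i) ∧ c = |birkhoff f n x - birkhoff f n y|}

/-- `Var_m (S_n f)`. -/
noncomputable def varBirk (f : MarkovShift A → ℝ) (n m : ℕ) : ℝ := sSup (varSet f n m)

/-- `Var_1 f < ∞`. -/
def Var1Finite (f : MarkovShift A → ℝ) : Prop := BddAbove (varSet f 1 1)

/-- The set whose supremum is `sup_{n ≥ 1} Var_{n+k}(S_n f)`. -/
def waltersSet (f : MarkovShift A → ℝ) (k : ℕ) : Set ℝ :=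
  {c | ∃ n, 1 ≤ n ∧ c ∈ varSet f n (n + k)}

/-- `M_k = sup_{n ≥ 1} Var_{n+k}(S_n f)`. -/
noncomputable def waltersSup (f : MarkovShift A → ℝ) (k : ℕ) : ℝ := sSup (waltersSet f k)

/-- The Walters condition. -/
def SatisfiesWalters (f : MarkovShift A → ℝ) : Prop :=
  (∀ k, 1 ≤ k → BddAbove (waltersSet f k)) ∧
    Tendsto (fun k => waltersSup f k) atTop (𝓝 0)

/-- The partition function `Z_n(f,a) = Σ_{σ^n x = x, x₀ = a} e^{S_n f (x)}`. -/
noncomputable def partitionSum (f : MarkovShift A → ℝ) (n : ℕ) (a : ℕ) : ℝ :=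
  ∑' x : {x : MarkovShift A // shift^[n] x = x ∧ x.1 0 = a}, Real.exp (birkhoff f n x.1)

/-- `f` has (finite) Gurevich pressure `p`. -/
def HasGurevichPressure (f : MarkovShift A → ℝ) (p : ℝ) : Prop :=
  ∀ a : ℕ, Admissible A a →
    (∀ n, 1 ≤ n → Summable fun x : {x : MarkovShift A // shift^[n] x = x ∧ x.1 0 = a} =>
        Real.exp (birkhoff f n x.1)) ∧
    Tendsto (fun n : ℕ => (1 / (n : ℝ)) * Real.log (partitionSum f n a)) atTop (𝓝 p)

/-- σ-invariant Borel probability measure. -/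
def IsInvariantProb (μ : Measure (MarkovShift A)) : Prop :=
  IsProbabilityMeasure μ ∧ μ.map shift = μ

/-- `m(f)`, the maximal ergodic average. -/
noncomputable def mf (f : MarkovShift A → ℝ) : ℝ :=
  sSup {c | ∃ μ : Measure (MarkovShift A),
    IsInvariantProb μ ∧ Integrable f μ ∧ ∫ x, f x ∂μ = c}

/-- A maximizing measure for `f`. -/
def IsMaximizing (f : MarkovShift A → ℝ) (μ : Measure (MarkovShift A)) : Prop :=
  IsInvariantProb μ ∧ Integrable f μ ∧ ∫ x, f x ∂μ = mf f

/-- Bounded real valued function. -/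
def BoundedFun (g : MarkovShift A → ℝ) : Prop := ∃ C, ∀ x, |g x| ≤ C

/-- A bounded calibrated sub-action for `f`. -/
def IsCalibratedSubaction (f V : MarkovShift A → ℝ) : Prop :=
  Continuous V ∧ BoundedFun V ∧
    (∀ x, f x + V x - V (shift x) - mf f ≤ 0) ∧
    (∀ y, ∃ x, shift x = y ∧ f x + V x - V (shift x) - mf f = 0)

/-- The Ruelle transfer operator `(L_g u)(x) = Σ_{σ y = x} e^{g(y)} u(y)`. -/
noncomputable def ruelle (g u : MarkovShift A → ℝ) (x : MarkovShift A) : ℝ :=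
  ∑' y : {y : MarkovShift A // shift y = x}, Real.exp (g y.1) * u y.1

/-- Ruelle-Perron-Frobenius data for the potential `f` with pressure `p`:
eigenfunction `h`, eigenmeasure `ν`. -/
def IsRPF (f : MarkovShift A → ℝ) (p : ℝ) (h : MarkovShift A → ℝ)
    (ν : Measure (MarkovShift A)) : Prop :=
  Continuous h ∧ (∀ x, 0 < h x) ∧
    (∀ x, ruelle f h x = Real.exp p * h x) ∧
    IsProbabilityMeasure ν ∧
    (∀ g : MarkovShift A → ℝ, Continuous g → BoundedFun g →
      ∫ x, ruelle f g x ∂ν = Real.exp p * ∫ x, g x ∂ν) ∧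
    ∫ x, h x ∂ν = 1

/-- The Gibbs measure `dμ = h dν`. -/
noncomputable def gibbs (h : MarkovShift A → ℝ) (ν : Measure (MarkovShift A)) :
    Measure (MarkovShift A) :=
  ν.withDensity fun x => ENNReal.ofReal (h x)

/-- The Mañé potential `S_f(x,y)` (with respect to the metric of parameter `r`). -/
noncomputable def manePot (r : ℝ) (f : MarkovShift A → ℝ) (x y : MarkovShift A) : EReal :=
  ⨅ ε : {ε : ℝ // 0 < ε}, ⨆ n : {n : ℕ // 1 ≤ n},
    ⨆ _z : {z : MarkovShift A // dist' r x z < ε.1 ∧ shift^[n.1] z = y},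
      ((birkhoff (fun w => f w - mf f) n.1 _z.1 : ℝ) : EReal)

/-- The (topological) support of a measure. -/
def msupport (μ : Measure (MarkovShift A)) : Set (MarkovShift A) :=
  {x | ∀ U : Set (MarkovShift A), IsOpen U → x ∈ U → 0 < μ U}

end MarkovShift


namespace MarkovShift
variable {A : ℕ → ℕ → Bool}

instance : T2Space (MarkovShift A) :=
  inferInstanceAs (T2Space {x : ℕ → ℕ // ∀ i, A (x i) (x (i + 1)) = true})
theorem isEmbedding_val : IsEmbedding (fun x : MarkovShift A => x.1) := IsEmbedding.subtypeVal

instance : SecondCountableTopology (MarkovShift A) := isEmbedding_val.secondCountableTopology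

instance : TopologicalSpace.MetrizableSpace (MarkovShift A) := isEmbedding_val.metrizableSpace

theorem ext' {x y : MarkovShift A} (h : ∀ i, x.1 i = y.1 i) : x = y := Subtype.ext (funext h)

theorem shift_val (x : MarkovShift A) (i : ℕ) : (shift x).1 i = x.1 (i + 1) := rfl

theorem iter_val (n : ℕ) (x : MarkovShift A) (i : ℕ) : (shift^[n] x).1 i = x.1 (i + n) := by
  induction n generalizing x with
  | zero => rfl
  | succ n ih => rw [Function.iterate_succ_apply, ih, shift_val]; congr 1

theorem continuous_coord (i : ℕ) : Continuous (fun x : MarkovShift A => x.1 i) :=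
  (continuous_apply i).comp continuous_subtype_val

theorem continuous_iff_coord {Y : Type*} [TopologicalSpace Y] {g : Y → MarkovShift A}
    (h : ∀ i, Continuous fun y => (g y).1 i) : Continuous g :=
  Continuous.subtype_mk (continuous_pi h) _

theorem continuous_shift : Continuous (shift : MarkovShift A → MarkovShift A) :=
  continuous_iff_coord fun i => continuous_coord (i + 1)

theorem continuous_iter (n : ℕ) : Continuous (shift^[n] : MarkovShift A → MarkovShift A) :=
  continuous_shift.iterate n

theorem tendsto_iff_coord {ι : Type*} {l : Filter ι} {z : ι → MarkovShift A} {x : MarkovShift A} :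
    Tendsto z l (𝓝 x) ↔ ∀ j, ∀ᶠ i in l, (z i).1 j = x.1 j := by
  rw [isEmbedding_val.tendsto_nhds_iff, tendsto_pi_nhds]
  simp [nhds_discrete]

theorem mem_cyl_self (x : MarkovShift A) (n : ℕ) : x ∈ cylOf x n := fun _ _ => rfl

theorem cyl_eq_of_mem {x y : MarkovShift A} {n : ℕ} (h : y ∈ cylOf x n) : cylOf y n = cylOf x n := by
  ext z
  exact ⟨fun hz i hi => (hz i hi).trans (h i hi), fun hz i hi => (hz i hi).trans (h i hi).symm⟩

theorem mem_cyl_comm {x y : MarkovShift A} {n : ℕ} : y ∈ cylOf x n ↔ x ∈ cylOf y n :=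
  ⟨fun h i hi => (h i hi).symm, fun h i hi => (h i hi).symm⟩

theorem cyl_anti (x : MarkovShift A) {m n : ℕ} (h : m ≤ n) : cylOf x n ⊆ cylOf x m :=
  fun _ hy i hi => hy i (hi.trans_le h)

theorem cyl_iter {x y : MarkovShift A} {k n : ℕ} (h : y ∈ cylOf x (k + n)) :
    shift^[k] y ∈ cylOf (shift^[k] x) n := by
  intro i hi
  rw [iter_val, iter_val]; exact h _ (by omega)

theorem isOpen_cyl (x : MarkovShift A) (n : ℕ) : IsOpen (cylOf x n) := by
  have : cylOf x n = ⋂ i ∈ Finset.range n, {y : MarkovShift A | y.1 i = x.1 i} := by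
    ext y; simp [cylOf]
  rw [this]
  exact isOpen_biInter_finset fun i _ => (isOpen_discrete ({x.1 i} : Set ℕ)).preimage (continuous_coord i)

theorem isClosed_cyl (x : MarkovShift A) (n : ℕ) : IsClosed (cylOf x n) := by
  have : cylOf x n = ⋂ i ∈ Finset.range n, {y : MarkovShift A | y.1 i = x.1 i} := by
    ext y; simp [cylOf]
  rw [this]
  exact isClosed_biInter fun i _ => (isClosed_discrete ({x.1 i} : Set ℕ)).preimage (continuous_coord i)

theorem isClopen_cyl (x : MarkovShift A) (n : ℕ) : IsClopen (cylOf x n) :=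
  ⟨isClosed_cyl x n, isOpen_cyl x n⟩

theorem measurableSet_cyl (x : MarkovShift A) (n : ℕ) : MeasurableSet (cylOf x n) :=
  (isOpen_cyl x n).measurableSet

theorem tendsto_cyl (x : MarkovShift A) {z : ℕ → MarkovShift A} (h : ∀ n, z n ∈ cylOf x n) :
    Tendsto z atTop (𝓝 x) := by
  rw [tendsto_iff_coord]
  intro j
  filter_upwards [eventually_gt_atTop j] with n hn
  exact h n j hn

theorem exists_cyl_subset {x : MarkovShift A} {U : Set (MarkovShift A)} (hU : U ∈ 𝓝 x) :
    ∃ n, cylOf x (n + 1) ⊆ U := by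
  by_contra! hcon
  simp only [Set.not_subset] at hcon
  choose z hz hzU using hcon
  have : Tendsto z atTop (𝓝 x) := tendsto_cyl x fun n => cyl_anti x (Nat.le_succ n) (hz n)
  obtain ⟨n, hn⟩ := (this.eventually hU).exists
  exact hzU n hn

def cyls (A : ℕ → ℕ → Bool) : Set (Set (MarkovShift A)) := {s | ∃ x n, s = cylOf x (n + 1)}

theorem isTopologicalBasis_cyls : TopologicalSpace.IsTopologicalBasis (cyls A) := by
  apply TopologicalSpace.isTopologicalBasis_of_isOpen_of_nhds
  · rintro u ⟨x, n, rfl⟩; exact isOpen_cyl _ _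
  · intro x U hx hU
    obtain ⟨n, hn⟩ := exists_cyl_subset (hU.mem_nhds hx)
    exact ⟨_, ⟨x, n, rfl⟩, mem_cyl_self _ _, hn⟩

theorem isPiSystem_cyls : IsPiSystem (cyls A) := by
  rintro _ ⟨x, n, rfl⟩ _ ⟨y, m, rfl⟩ ⟨z, hz1, hz2⟩
  refine ⟨z, max n m, ?_⟩
  rw [← cyl_eq_of_mem hz1, ← cyl_eq_of_mem hz2]
  ext w
  constructor
  · rintro ⟨h1, h2⟩ i hi
    rcases le_total n m with h | h
    · exact h2 i (by simpa [h] using hi)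
    · exact h1 i (by simpa [h] using hi)
  · intro h
    exact ⟨fun i hi => h i (by omega), fun i hi => h i (by omega)⟩

theorem meas_ext {μ ν : Measure (MarkovShift A)} (hfin : ∀ x n, μ (cylOf x (n + 1)) ≠ ∞)
    (h : ∀ x n, μ (cylOf x (n + 1)) = ν (cylOf x (n + 1))) : μ = ν := by
  refine Measure.ext_of_generateFrom_of_cover_subset (S := cyls A) (T := {s | ∃ x, s = cylOf x 1})
    ?_ isPiSystem_cyls ?_ ?_ ?_ ?_ ?_
  · exact isTopologicalBasis_cyls.borel_eq_generateFrom
  · rintro _ ⟨x, rfl⟩; exact ⟨x, 0, rfl⟩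
  · refine Set.Countable.mono ?_ (Set.countable_range (fun a : ℕ => {y : MarkovShift A | y.1 0 = a}))
    rintro _ ⟨x, rfl⟩
    refine ⟨x.1 0, ?_⟩
    ext y; simp [cylOf]
  · ext x; simp only [Set.mem_sUnion, Set.mem_univ, iff_true]
    exact ⟨_, ⟨x, rfl⟩, mem_cyl_self _ _⟩
  · rintro _ ⟨x, rfl⟩; exact hfin x 0
  · rintro _ ⟨x, n, rfl⟩; exact h x n

/-- splice: follow `x` for `j` steps, then `c`. -/
def splice (x : MarkovShift A) (j : ℕ) (c : MarkovShift A) (h : x.1 j = c.1 0) : MarkovShift A :=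
  ⟨fun i => if i < j then x.1 i else c.1 (i - j), by
    intro i
    by_cases h1 : i + 1 < j
    · simp only [h1, show i < j by omega, if_true]; exact x.2 i
    · by_cases h2 : i < j
      · have : j = i + 1 := by omega
        subst this
        simp only [h2, lt_irrefl, if_true, if_false, Nat.sub_self, ← h]; exact x.2 i
      · simp only [h1, h2, if_false]
        rw [show i + 1 - j = (i - j) + 1 by omega]; exact c.2 _⟩

theorem splice_lt {x c : MarkovShift A} {j : ℕ} (h : x.1 j = c.1 0) {i : ℕ} (hi : i < j) :
    (splice x j c h).1 i = x.1 i := by simp [splice, hi]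

theorem splice_mem {x c : MarkovShift A} {j : ℕ} (h : x.1 j = c.1 0) :
    splice x j c h ∈ cylOf x j := fun i hi => splice_lt h hi

theorem iter_splice {x c : MarkovShift A} {j : ℕ} (h : x.1 j = c.1 0) :
    shift^[j] (splice x j c h) = c := by
  apply ext'; intro i; rw [iter_val]; simp [splice]

theorem splice_agree {x c : MarkovShift A} {j l : ℕ} (h : x.1 j = c.1 0)
    (hl : shift^[j] x ∈ cylOf c l) : splice x j c h ∈ cylOf x (j + l) := by
  intro i hi
  by_cases hij : i < j
  · exact splice_lt h hij
  · have := hl (i - j) (by omega)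
    rw [iter_val, Nat.sub_add_cancel (by omega)] at this
    simp [splice, hij, this]

theorem eq_of_agree {x y : MarkovShift A} {j : ℕ} (h : y ∈ cylOf x j)
    (h2 : shift^[j] y = shift^[j] x) : y = x := by
  apply ext'; intro i
  by_cases hi : i < j
  · exact h i hi
  · have := congrArg (fun w => w.1 (i - j)) h2
    simp only [iter_val] at this
    rwa [Nat.sub_add_cancel (by omega)] at this

theorem limit_point {ι : Type*} (l : Ultrafilter ι) (z : ι → MarkovShift A)
    (h : ∀ j, ∃ G : Set ℕ, G.Finite ∧ ∀ᶠ i in (l : Filter ι), (z i).1 j ∈ G) :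
    ∃ x, Tendsto z l (𝓝 x) := by
  have : ∀ j, ∃ a, ∀ᶠ i in (l : Filter ι), (z i).1 j = a := by
    intro j
    obtain ⟨G, hG, hev⟩ := h j
    have := (Ultrafilter.finite_biUnion_mem_iff hG (f := l)
      (s := fun a => {i | (z i).1 j = a})).1 (by
        filter_upwards [hev] with i hi
        simpa using hi)
    obtain ⟨a, _, ha⟩ := this
    exact ⟨a, ha⟩
  choose x hx using this
  have hadm : ∀ i, A (x i) (x (i + 1)) = true := by
    intro i
    obtain ⟨k, h1, h2⟩ := ((hx i).and (hx (i + 1))).exists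
    rw [← h1, ← h2]; exact (z k).2 i
  exact ⟨⟨x, hadm⟩, tendsto_iff_coord.2 hx⟩

theorem isCompact_box (G : Set ℕ) (hG : G.Finite) :
    IsCompact {x : MarkovShift A | ∀ i, x.1 i ∈ G} := by
  rw [isCompact_iff_ultrafilter_le_nhds]
  intro l hl
  have hl' : {x : MarkovShift A | ∀ i, x.1 i ∈ G} ∈ l := by simpa using hl
  obtain ⟨x, hx⟩ := limit_point l id (fun j => ⟨G, hG, by
    filter_upwards [hl'] with y hy using hy j⟩)
  refine ⟨x, ?_, hx⟩
  intro i
  obtain ⟨y, h1, h2⟩ := ((tendsto_iff_coord.1 hx i).and hl').exists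
  rw [← h1]; exact h2 i

theorem birkhoff_zero (f : MarkovShift A → ℝ) (x : MarkovShift A) : birkhoff f 0 x = 0 := by
  simp [birkhoff]

theorem birkhoff_succ (f : MarkovShift A → ℝ) (n : ℕ) (x : MarkovShift A) :
    birkhoff f (n + 1) x = birkhoff f n x + f (shift^[n] x) := by
  simp [birkhoff, Finset.sum_range_succ]

theorem birkhoff_succ' (f : MarkovShift A → ℝ) (n : ℕ) (x : MarkovShift A) :
    birkhoff f (n + 1) x = f x + birkhoff f n (shift x) := by
  simp [birkhoff, Finset.sum_range_succ', add_comm]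

theorem birkhoff_one (f : MarkovShift A → ℝ) (x : MarkovShift A) : birkhoff f 1 x = f x := by
  simp [birkhoff]

end MarkovShift

namespace MarkovShift
variable {A : ℕ → ℕ → Bool}

/-- empirical measures along the orbit of `z` -/
noncomputable def empM (z : MarkovShift A) (N : ℕ) : Measure (MarkovShift A) :=
  ((N + 1 : ℕ) : ℝ≥0∞)⁻¹ • ∑ j ∈ Finset.range (N + 1), Measure.dirac (shift^[j] z)

theorem empM_apply (z : MarkovShift A) (N : ℕ) {S : Set (MarkovShift A)} (hS : MeasurableSet S) :
    empM z N S = ((N + 1 : ℕ) : ℝ≥0∞)⁻¹ *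
      ∑ j ∈ Finset.range (N + 1), S.indicator (1 : MarkovShift A → ℝ≥0∞) (shift^[j] z) := by
  simp [empM, Measure.dirac_apply' _ hS]

instance empM_prob (z : MarkovShift A) (N : ℕ) : IsProbabilityMeasure (empM z N) := ⟨by
  rw [empM_apply z N MeasurableSet.univ]
  simp only [Set.indicator_univ, Pi.one_apply, Finset.sum_const, Finset.card_range, nsmul_eq_mul,
    mul_one]
  exact ENNReal.inv_mul_cancel (by simp) (by simp)⟩

theorem empM_avoid (z : MarkovShift A) (N : ℕ) {S : Set (MarkovShift A)} (hS : MeasurableSet S)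
    (h : ∀ j, shift^[j] z ∉ S) : empM z N S = 0 := by
  rw [empM_apply z N hS]
  simp [h]

theorem kb (z : MarkovShift A) (G : Set ℕ) (hG : G.Finite) (hz : ∀ i, z.1 i ∈ G) :
    ∃ μ : Measure (MarkovShift A), IsInvariantProb μ ∧
      ∀ O, IsOpen O → (∀ j, shift^[j] z ∉ O) → μ O = 0 := by
  haveI : HasOuterApproxClosed (MarkovShift A) := by
    let _ := TopologicalSpace.metrizableSpaceMetric (MarkovShift A)
    infer_instance
  let E : ℕ → ProbabilityMeasure (MarkovShift A) := fun N => ⟨empM z N, empM_prob z N⟩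
  have hK := isCompact_box (A := A) G hG
  have htight : IsTightMeasureSet {((μ : ProbabilityMeasure (MarkovShift A)) :
      Measure (MarkovShift A)) | μ ∈ Set.range E} := by
    rw [isTightMeasureSet_iff_exists_isCompact_measure_compl_le]
    intro ε hε
    refine ⟨_, hK, ?_⟩
    rintro _ ⟨_, ⟨N, rfl⟩, rfl⟩
    change empM z N _ ≤ ε
    rw [empM_avoid z N hK.measurableSet.compl]
    · exact zero_le
    · intro j hj
      apply hj
      intro i; rw [iter_val]; exact hz _
  have hcomp := isCompact_closure_of_isTightMeasureSet htight
  obtain ⟨μ, -, hμ⟩ := isCompact_iff_ultrafilter_le_nhds.1 hcomp ((hyperfilter ℕ).map E) (by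
    rw [le_principal_iff, Ultrafilter.coe_map, mem_map]
    filter_upwards with N using subset_closure ⟨N, rfl⟩)
  have hlim : Tendsto E (hyperfilter ℕ) (𝓝 μ) := hμ
  have hclopen : ∀ C : Set (MarkovShift A), IsClopen C →
      Tendsto (fun N => empM z N C) (hyperfilter ℕ) (𝓝 ((μ : Measure (MarkovShift A)) C)) := by
    intro C hC
    exact ProbabilityMeasure.tendsto_measure_of_null_frontier_of_tendsto' hlim (by
      rw [hC.frontier_eq]; simp)
  have hinv0 : Tendsto (fun N : ℕ => ((N + 1 : ℕ) : ℝ≥0∞)⁻¹) (hyperfilter ℕ) (𝓝 0) :=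
    ((tendsto_add_atTop_iff_nat 1).2 ENNReal.tendsto_inv_nat_nhds_zero).mono_left
      Nat.hyperfilter_le_atTop
  have hinvC : ∀ C : Set (MarkovShift A), IsClopen C →
      (μ : Measure (MarkovShift A)) (shift ⁻¹' C) = (μ : Measure (MarkovShift A)) C := by
    intro C hC
    have hC' : IsClopen (shift ⁻¹' C) := hC.preimage continuous_shift
    have h1 := hclopen _ hC
    have h2 := hclopen _ hC'
    have e2 : ∀ N, empM z N (shift ⁻¹' C) = ((N + 1 : ℕ) : ℝ≥0∞)⁻¹ *
      ∑ j ∈ Finset.range (N + 1), C.indicator (1 : MarkovShift A → ℝ≥0∞) (shift^[j + 1] z) := by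
      intro N
      rw [empM_apply z N hC'.isOpen.measurableSet]
      congr 1
      refine Finset.sum_congr rfl fun j _ => ?_
      rw [Function.iterate_succ_apply']; rfl
    have hle1 : ∀ y, C.indicator (1 : MarkovShift A → ℝ≥0∞) y ≤ 1 := fun y =>
      Set.indicator_le_self' (by simp) y
    have key : ∀ N, ∑ j ∈ Finset.range (N + 1), C.indicator (1 : MarkovShift A → ℝ≥0∞) (shift^[j + 1] z)
        + C.indicator (1 : MarkovShift A → ℝ≥0∞) z =
        ∑ j ∈ Finset.range (N + 1), C.indicator (1 : MarkovShift A → ℝ≥0∞) (shift^[j] z) +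
          C.indicator (1 : MarkovShift A → ℝ≥0∞) (shift^[N + 1] z) := by
      intro N
      rw [← Finset.sum_range_succ (fun j => C.indicator (1 : MarkovShift A → ℝ≥0∞) (shift^[j] z)),
        Finset.sum_range_succ' (fun j => C.indicator (1 : MarkovShift A → ℝ≥0∞) (shift^[j] z))]
      rfl
    have l1 := h1.add hinv0
    have l2 := h2.add hinv0
    rw [add_zero] at l1 l2
    apply le_antisymm
    · refine le_of_tendsto_of_tendsto' h2 l1 fun N => ?_
      rw [e2, empM_apply z N hC.isOpen.measurableSet]
      calc _ ≤ ((N + 1 : ℕ) : ℝ≥0∞)⁻¹ * (∑ j ∈ Finset.range (N + 1),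
            C.indicator (1 : MarkovShift A → ℝ≥0∞) (shift^[j] z) + 1) := by
            gcongr
            refine le_trans le_self_add ((key N).le.trans ?_)
            gcongr; exact hle1 _
        _ = _ := by rw [mul_add, mul_one]
    · refine le_of_tendsto_of_tendsto' h1 l2 fun N => ?_
      rw [e2, empM_apply z N hC.isOpen.measurableSet]
      calc _ ≤ ((N + 1 : ℕ) : ℝ≥0∞)⁻¹ * (∑ j ∈ Finset.range (N + 1),
            C.indicator (1 : MarkovShift A → ℝ≥0∞) (shift^[j + 1] z) + 1) := by
            gcongr
            refine le_trans le_self_add ((key N).ge.trans ?_)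
            gcongr; exact hle1 _
        _ = _ := by rw [mul_add, mul_one]
  refine ⟨μ, ⟨inferInstance, ?_⟩, ?_⟩
  · symm
    refine meas_ext (fun x n => measure_ne_top _ _) fun x n => ?_
    rw [Measure.map_apply continuous_shift.measurable (measurableSet_cyl _ _)]
    exact (hinvC _ (isClopen_cyl _ _)).symm
  · intro O hO hav
    have := ProbabilityMeasure.le_liminf_measure_open_of_tendsto hlim hO
    refine le_antisymm (this.trans ?_) zero_le
    have e : (fun i => ((E i : ProbabilityMeasure (MarkovShift A)) : Measure (MarkovShift A)) O)
        = fun _ => 0 := by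
      funext N; exact empM_avoid z N hO.measurableSet hav
    rw [e]; simp

end MarkovShift

namespace MarkovShift
variable {A : ℕ → ℕ → Bool}

/-- prepend a symbol when admissible -/
def pre (a : ℕ) (x : MarkovShift A) : MarkovShift A :=
  if h : A a (x.1 0) = true then
    ⟨fun i => if i = 0 then a else x.1 (i - 1), by
      intro i
      rcases i with _ | i
      · simpa using h
      · simpa using x.2 i⟩
  else x

theorem pre_zero {a : ℕ} {x : MarkovShift A} (h : A a (x.1 0) = true) : (pre a x).1 0 = a := by
  simp [pre, h]

theorem pre_succ {a : ℕ} {x : MarkovShift A} (h : A a (x.1 0) = true) (i : ℕ) :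
    (pre a x).1 (i + 1) = x.1 i := by
  simp [pre, h]

theorem shift_pre {a : ℕ} {x : MarkovShift A} (h : A a (x.1 0) = true) : shift (pre a x) = x :=
  ext' fun i => pre_succ h i

theorem pre_shift (y : MarkovShift A) : pre (y.1 0) (shift y) = y := by
  have h : A (y.1 0) ((shift y).1 0) = true := y.2 0
  apply ext'
  rintro (_ | i)
  · exact pre_zero h
  · exact pre_succ h i

theorem continuous_pre (a : ℕ) : Continuous (pre a : MarkovShift A → MarkovShift A) := by
  apply continuous_iff_coord
  intro i
  rcases i with _ | i
  · have : (fun y : MarkovShift A => (pre a y).1 0) =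
        (fun b : ℕ => if A a b = true then a else b) ∘ fun y => y.1 0 := by
      funext y
      by_cases h : A a (y.1 0) = true
      · simp [pre_zero h, h]
      · simp [pre, h]
    rw [this]
    exact continuous_of_discreteTopology.comp (continuous_coord 0)
  · have : (fun y : MarkovShift A => (pre a y).1 (i + 1)) =
        (fun b : ℕ × ℕ × ℕ => if A a b.1 = true then b.2.1 else b.2.2) ∘
          fun y => (y.1 0, y.1 i, y.1 (i + 1)) := by
      funext y
      by_cases h : A a (y.1 0) = true
      · simp [pre_succ h, h]
      · simp [pre, h]
    rw [this]
    exact continuous_of_discreteTopology.comp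
      ((continuous_coord 0).prodMk ((continuous_coord i).prodMk (continuous_coord (i + 1))))

/-- counting transfer operator -/
noncomputable def Nop (u : MarkovShift A → ℝ≥0∞) (x : MarkovShift A) : ℝ≥0∞ :=
  ∑' a : ℕ, if A a (x.1 0) = true then u (pre a x) else 0

/-- exponential weight -/
noncomputable def E (r : ℝ) : ℝ≥0∞ := ENNReal.ofReal (Real.exp r)

theorem E_add (a b : ℝ) : E (a + b) = E a * E b := by
  rw [E, Real.exp_add, ENNReal.ofReal_mul (Real.exp_pos _).le]; rfl

theorem E_zero : E 0 = 1 := by simp [E]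

theorem E_mono {a b : ℝ} (h : a ≤ b) : E a ≤ E b :=
  ENNReal.ofReal_le_ofReal (Real.exp_le_exp.2 h)

theorem E_ne_top (a : ℝ) : E a ≠ ∞ := ENNReal.ofReal_ne_top

theorem E_pos (a : ℝ) : 0 < E a := ENNReal.ofReal_pos.2 (Real.exp_pos _)

theorem E_ne_zero (a : ℝ) : E a ≠ 0 := (E_pos a).ne'

theorem measurable_E : Measurable E := by unfold E; fun_prop

theorem E_mul_neg (a : ℝ) : E a * E (-a) = 1 := by rw [← E_add, add_neg_cancel, E_zero]

/-- weighted operator -/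
noncomputable def Tw (w : MarkovShift A → ℝ) (u : MarkovShift A → ℝ≥0∞) :
    MarkovShift A → ℝ≥0∞ := Nop fun y => E (w y) * u y

theorem Nop_measurable {u : MarkovShift A → ℝ≥0∞} (hu : Measurable u) : Measurable (Nop u) := by
  refine Measurable.tsum fun a => ?_
  refine Measurable.ite ?_ (hu.comp (continuous_pre a).measurable) measurable_const
  exact (continuous_coord 0).measurable (MeasurableSet.of_discrete (s := {b : ℕ | A a b = true}))

theorem Tw_measurable {w : MarkovShift A → ℝ} (hw : Measurable w) {u : MarkovShift A → ℝ≥0∞}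
    (hu : Measurable u) : Measurable (Tw w u) :=
  Nop_measurable ((measurable_E.comp hw).mul hu)

theorem Tw_iter_measurable {w : MarkovShift A → ℝ} (hw : Measurable w) (k : ℕ)
    {u : MarkovShift A → ℝ≥0∞} (hu : Measurable u) : Measurable ((Tw w)^[k] u) := by
  induction k generalizing u with
  | zero => exact hu
  | succ k ih => exact ih (Tw_measurable hw hu)

theorem Nop_le {u v : MarkovShift A → ℝ≥0∞} {x : MarkovShift A}
    (h : ∀ y, shift y = x → u y ≤ v y) : Nop u x ≤ Nop v x := by
  refine ENNReal.tsum_le_tsum fun a => ?_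
  by_cases ha : A a (x.1 0) = true
  · simp only [ha, if_true]; exact h _ (shift_pre ha)
  · simp [ha]

theorem Nop_congr {u v : MarkovShift A → ℝ≥0∞} {x : MarkovShift A}
    (h : ∀ y, shift y = x → u y = v y) : Nop u x = Nop v x :=
  le_antisymm (Nop_le fun y hy => (h y hy).le) (Nop_le fun y hy => (h y hy).ge)

theorem Nop_mono {u v : MarkovShift A → ℝ≥0∞} (h : u ≤ v) : Nop u ≤ Nop v :=
  fun _ => Nop_le fun y _ => h y

theorem Tw_mono {w : MarkovShift A → ℝ} {u v : MarkovShift A → ℝ≥0∞} (h : u ≤ v) :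
    Tw w u ≤ Tw w v := Nop_mono fun y => mul_le_mul_right (h y) _

theorem Tw_iter_mono {w : MarkovShift A → ℝ} (k : ℕ) {u v : MarkovShift A → ℝ≥0∞} (h : u ≤ v) :
    (Tw w)^[k] u ≤ (Tw w)^[k] v := by
  induction k generalizing u v with
  | zero => exact h
  | succ k ih => exact ih (Tw_mono h)

theorem le_Nop (u : MarkovShift A → ℝ≥0∞) (y : MarkovShift A) : u y ≤ Nop u (shift y) := by
  have h : A (y.1 0) ((shift y).1 0) = true := y.2 0
  have := ENNReal.le_tsum (f := fun a : ℕ => if A a ((shift y).1 0) = true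
    then u (pre a (shift y)) else 0) (y.1 0)
  simp only [h, if_true, pre_shift] at this
  exact this

theorem Nop_mul_shift (u v : MarkovShift A → ℝ≥0∞) (x : MarkovShift A) :
    Nop (fun y => v (shift y) * u y) x = v x * Nop u x := by
  rw [Nop, Nop, ← ENNReal.tsum_mul_left]
  refine tsum_congr fun a => ?_
  by_cases ha : A a (x.1 0) = true
  · simp [ha, shift_pre ha]
  · simp [ha]

theorem Nop_const_mul (c : ℝ≥0∞) (u : MarkovShift A → ℝ≥0∞) (x : MarkovShift A) :
    Nop (fun y => c * u y) x = c * Nop u x := Nop_mul_shift u (fun _ => c) x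

theorem Tw_mul_shift (w : MarkovShift A → ℝ) (u v : MarkovShift A → ℝ≥0∞) (x : MarkovShift A) :
    Tw w (fun y => v (shift y) * u y) x = v x * Tw w u x := by
  rw [Tw, Tw, ← Nop_mul_shift]
  congr 1; funext y; ring

theorem Tw_const_mul (w : MarkovShift A → ℝ) (c : ℝ≥0∞) (u : MarkovShift A → ℝ≥0∞) :
    Tw w (fun y => c * u y) = fun x => c * Tw w u x := by
  funext x; exact Tw_mul_shift w u (fun _ => c) x

theorem Tw_iter_const_mul (w : MarkovShift A → ℝ) (c : ℝ≥0∞) (k : ℕ) (u : MarkovShift A → ℝ≥0∞) :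
    (Tw w)^[k] (fun y => c * u y) = fun x => c * (Tw w)^[k] u x := by
  induction k generalizing u with
  | zero => rfl
  | succ k ih => rw [Function.iterate_succ_apply, Tw_const_mul, ih, Function.iterate_succ_apply]

theorem twist (w v : MarkovShift A → ℝ) (k : ℕ) (u : MarkovShift A → ℝ≥0∞) :
    (Tw w)^[k] (fun y => E (birkhoff v k y) * u y) = (Tw (fun y => w y + v y))^[k] u := by
  induction k generalizing u with
  | zero => simp [birkhoff_zero, E_zero]
  | succ k ih =>
    rw [Function.iterate_succ_apply, Function.iterate_succ_apply, ← ih]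
    congr 1
    funext x
    have : (fun y => E (birkhoff v (k + 1) y) * u y) =
        fun y => (fun z => E (birkhoff v k z)) (shift y) * (E (v y) * u y) := by
      funext y
      rw [birkhoff_succ', E_add]; ring
    rw [this]
    refine (Tw_mul_shift w (fun y => E (v y) * u y) (fun z => E (birkhoff v k z)) x).trans ?_
    congr 1
    rw [Tw, Tw]
    congr 1; funext y
    rw [E_add]; ring

theorem Tw_zero (u : MarkovShift A → ℝ≥0∞) : Tw (fun _ => (0:ℝ)) u = Nop u := by
  simp [Tw, E_zero]

/-- `Tw w ^ k` via counting operator. -/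
theorem twist_Nop (w : MarkovShift A → ℝ) (k : ℕ) (u : MarkovShift A → ℝ≥0∞) :
    (Tw w)^[k] u = Nop^[k] (fun y => E (birkhoff w k y) * u y) := by
  have := twist (fun _ : MarkovShift A => (0:ℝ)) w k u
  simp only [zero_add] at this
  rw [← this]
  congr 1
  funext u; rw [Tw_zero]

noncomputable def ind (S : Set (MarkovShift A)) : MarkovShift A → ℝ≥0∞ := S.indicator 1

theorem Nop_cyl (x : MarkovShift A) (n : ℕ) :
    Nop (ind (cylOf x (n + 2))) = ind (cylOf (shift x) (n + 1)) := by
  funext y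
  by_cases hy : y ∈ cylOf (shift x) (n + 1)
  · have h0 : A (x.1 0) (y.1 0) = true := by
      rw [hy 0 (by omega)]; exact x.2 0
    have hmem : pre (x.1 0) y ∈ cylOf x (n + 2) := by
      rintro (_ | i) hi
      · exact pre_zero h0
      · rw [pre_succ h0]; exact hy i (by omega)
    rw [Nop, tsum_eq_single (x.1 0)]
    · simp [h0, ind, hmem, hy]
    · intro b hb
      by_cases hA : A b (y.1 0) = true
      · simp only [hA, if_true]
        refine Set.indicator_of_notMem (fun hm => hb ?_) _
        rw [← pre_zero hA]; exact hm 0 (by omega)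
      · simp [hA]
  · rw [show ind (cylOf (shift x) (n + 1)) y = 0 from Set.indicator_of_notMem hy _, Nop,
      ENNReal.tsum_eq_zero]
    intro b
    by_cases hA : A b (y.1 0) = true
    · simp only [hA, if_true]
      refine Set.indicator_of_notMem (fun hm => hy ?_) _
      intro i hi
      have := hm (i + 1) (by omega)
      rwa [pre_succ hA] at this
    · simp [hA]

theorem Nop_iter_cyl (x : MarkovShift A) (k n : ℕ) :
    Nop^[k] (ind (cylOf x (k + (n + 1)))) = ind (cylOf (shift^[k] x) (n + 1)) := by
  induction k generalizing x with
  | zero => simp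
  | succ k ih =>
    rw [Function.iterate_succ_apply, Function.iterate_succ_apply,
      show k + 1 + (n + 1) = (k + n) + 2 by ring, Nop_cyl, ← ih]
    rfl

theorem Nop_iter_compare (K : ℝ≥0∞) (u : MarkovShift A → ℝ≥0∞) (n : ℕ) (x x' : MarkovShift A)
    (h0 : x.1 0 = x'.1 0)
    (h : ∀ y y', shift^[n] y = x → shift^[n] y' = x' → y' ∈ cylOf y n → u y ≤ K * u y') :
    Nop^[n] u x ≤ K * Nop^[n] u x' := by
  induction n generalizing x x' with
  | zero => exact h x x' rfl rfl (fun i hi => absurd hi (by omega))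
  | succ n ih =>
    rw [Function.iterate_succ_apply', Nop, Nop, ← ENNReal.tsum_mul_left]
    refine ENNReal.tsum_le_tsum fun a => ?_
    by_cases ha : A a (x.1 0) = true
    · have ha' : A a (x'.1 0) = true := h0 ▸ ha
      simp only [ha, ha', if_true]
      refine ih _ _ (by rw [pre_zero ha, pre_zero ha']) ?_
      intro y y' hy hy' hag
      refine h y y' ?_ ?_ ?_
      · rw [Function.iterate_succ_apply', hy, shift_pre ha]
      · rw [Function.iterate_succ_apply', hy', shift_pre ha']
      · intro i hi
        rcases Nat.lt_succ_iff_lt_or_eq.1 hi with hi | rfl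
        · exact hag i hi
        · have e1 := iter_val i y 0
          have e2 := iter_val i y' 0
          rw [hy, pre_zero ha, zero_add] at e1
          rw [hy', pre_zero ha', zero_add] at e2
          rw [← e1, ← e2]
    · have ha' : ¬ A a (x'.1 0) = true := h0 ▸ ha
      simp [ha, ha']

/-- fibre equivalence -/
def fibEquiv (x : MarkovShift A) : {a : ℕ // A a (x.1 0) = true} ≃ {y : MarkovShift A // shift y = x} where
  toFun a := ⟨pre a.1 x, shift_pre a.2⟩
  invFun y := ⟨y.1.1 0, by
    obtain ⟨y, rfl⟩ := y
    exact y.2 0⟩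
  left_inv a := Subtype.ext (pre_zero a.2)
  right_inv y := Subtype.ext (by
    obtain ⟨y, rfl⟩ := y
    exact pre_shift y)

theorem Nop_eq_fib (u : MarkovShift A → ℝ≥0∞) (x : MarkovShift A) :
    Nop u x = ∑' y : {y : MarkovShift A // shift y = x}, u y.1 := by
  rw [← (fibEquiv x).tsum_eq (fun y => u y.1)]
  have := tsum_subtype {a : ℕ | A a (x.1 0) = true} (fun a => u (pre a x))
  exact Eq.trans (tsum_congr fun a => by by_cases h : A a (x.1 0) = true <;> simp [h]) this.symm

theorem ruelle_eq (g u : MarkovShift A → ℝ) (x : MarkovShift A) (hu : ∀ y, 0 ≤ u y)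
    (hs : Summable fun y : {y : MarkovShift A // shift y = x} => Real.exp (g y.1) * u y.1) :
    ENNReal.ofReal (ruelle g u x) = Tw g (fun y => ENNReal.ofReal (u y)) x := by
  rw [ruelle, ENNReal.ofReal_tsum_of_nonneg (fun y => mul_nonneg (Real.exp_pos _).le (hu _)) hs,
    Tw, Nop_eq_fib]
  refine tsum_congr fun y => ?_
  rw [ENNReal.ofReal_mul (Real.exp_pos _).le]; rfl

theorem ruelle_eq_of_pos (g u : MarkovShift A → ℝ) (x : MarkovShift A) (hu : ∀ y, 0 ≤ u y)
    (hs : 0 < ruelle g u x) :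
    ENNReal.ofReal (ruelle g u x) = Tw g (fun y => ENNReal.ofReal (u y)) x := by
  apply ruelle_eq g u x hu
  by_contra hn
  rw [ruelle, tsum_eq_zero_of_not_summable hn] at hs
  exact lt_irrefl _ hs

end MarkovShift

namespace MarkovShift
variable {A : ℕ → ℕ → Bool}

theorem measurable_ind {S : Set (MarkovShift A)} (hS : MeasurableSet S) : Measurable (ind S) :=
  measurable_one.indicator hS

theorem lintegral_ind (ν : Measure (MarkovShift A)) {S : Set (MarkovShift A)}
    (hS : MeasurableSet S) : ∫⁻ x, ind S x ∂ν = ν S := lintegral_indicator_one hS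

theorem ruelle_eq_toReal (g u : MarkovShift A → ℝ) (x : MarkovShift A) (hu : ∀ y, 0 ≤ u y)
    (hs : Tw g (fun y => ENNReal.ofReal (u y)) x ≠ ∞) :
    ruelle g u x = (Tw g (fun y => ENNReal.ofReal (u y)) x).toReal := by
  have hnn : ∀ y, 0 ≤ Real.exp (g y) * u y := fun y => mul_nonneg (Real.exp_pos _).le (hu _)
  rw [← ruelle_eq g u x hu, ENNReal.toReal_ofReal]
  · exact tsum_nonneg fun y => hnn _
  · rw [Tw, Nop_eq_fib] at hs
    have := ENNReal.summable_toReal hs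
    refine this.congr fun y => ?_
    rw [E, ← ENNReal.ofReal_mul (Real.exp_pos _).le, ENNReal.toReal_ofReal (hnn _)]

/-- the pushed measure -/
noncomputable def pushM (g : MarkovShift A → ℝ) (ν : Measure (MarkovShift A)) :
    Measure (MarkovShift A) :=
  Measure.sum fun a : ℕ =>
    (ν.withDensity (fun x => if A a (x.1 0) = true then E (g (pre a x)) else 0)).map (pre a)

theorem measurableSet_adm (a : ℕ) : MeasurableSet {x : MarkovShift A | A a (x.1 0) = true} :=
  (continuous_coord 0).measurable (MeasurableSet.of_discrete (s := {b : ℕ | A a b = true}))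

theorem lintegral_pushM (g : MarkovShift A → ℝ) (hg : Measurable g) (ν : Measure (MarkovShift A))
    {u : MarkovShift A → ℝ≥0∞} (hu : Measurable u) :
    ∫⁻ x, u x ∂(pushM g ν) = ∫⁻ x, Tw g u x ∂ν := by
  have hm : ∀ a : ℕ, Measurable fun x : MarkovShift A =>
      if A a (x.1 0) = true then E (g (pre a x)) else 0 := fun a =>
    Measurable.ite (measurableSet_adm a)
      (measurable_E.comp (hg.comp (continuous_pre a).measurable)) measurable_const
  rw [pushM, lintegral_sum_measure]
  have e : ∀ x, Tw g u x = ∑' a : ℕ, (if A a (x.1 0) = true then E (g (pre a x)) else 0) *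
      u (pre a x) := by
    intro x
    refine tsum_congr fun a => ?_
    by_cases h : A a (x.1 0) = true <;> simp [h]
  simp_rw [e]
  rw [lintegral_tsum]
  · refine tsum_congr fun a => ?_
    rw [lintegral_map hu (continuous_pre a).measurable]
    exact lintegral_withDensity_eq_lintegral_mul ν (hm a) (hu.comp (continuous_pre a).measurable)
  · intro a
    exact ((hm a).mul (hu.comp (continuous_pre a).measurable)).aemeasurable

theorem transfer (g : MarkovShift A → ℝ) (hg : Continuous g)
    (hb : ∀ a : ℕ, ∃ B, ∀ y : MarkovShift A, y.1 0 = a → g y ≤ B) (p : ℝ)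
    (ν : Measure (MarkovShift A)) [IsProbabilityMeasure ν]
    (hν : ∀ u : MarkovShift A → ℝ, Continuous u → BoundedFun u →
      ∫ x, ruelle g u x ∂ν = Real.exp p * ∫ x, u x ∂ν)
    {u : MarkovShift A → ℝ≥0∞} (hu : Measurable u) :
    ∫⁻ x, Tw g u x ∂ν = E p * ∫⁻ x, u x ∂ν := by
  have key : ∀ x n, ∫⁻ z, Tw g (ind (cylOf x (n + 1))) z ∂ν = E p * ν (cylOf x (n + 1)) := by
    intro x n
    set C := cylOf x (n + 1) with hC
    obtain ⟨B, hB⟩ := hb (x.1 0)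
    have hbd : ∀ z, Tw g (ind C) z ≤ E B := by
      intro z
      rw [Tw, Nop, tsum_eq_single (x.1 0)]
      · by_cases h : A (x.1 0) (z.1 0) = true
        · simp only [h, if_true]
          calc _ ≤ E B * 1 := by
                gcongr
                · exact E_mono (hB _ (pre_zero h))
                · exact Set.indicator_le_self' (by simp) _
            _ = E B := mul_one _
        · simp [h]
      · intro b hbne
        by_cases h : A b (z.1 0) = true
        · simp only [h, if_true]
          rw [show ind C (pre b z) = 0 from Set.indicator_of_notMem (fun hm => hbne (by
            rw [← pre_zero h]; exact hm 0 (by omega))) _, mul_zero]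
        · simp [h]
    have hcont : Continuous (C.indicator (fun _ => (1 : ℝ))) :=
      continuous_const.indicator (fun a ha => by
        rw [(isClopen_cyl x (n+1)).frontier_eq] at ha; exact absurd ha (by simp))
    have hbdd : BoundedFun (C.indicator (fun _ => (1 : ℝ))) := ⟨1, fun y => by
      by_cases hy : y ∈ C <;> simp [hy]⟩
    have h1 := hν _ hcont hbdd
    have e1 : (fun y => ENNReal.ofReal (C.indicator (fun _ => (1 : ℝ)) y)) = ind C := by
      funext y
      by_cases hy : y ∈ C <;> simp [ind, hy]
    have e2 : ∀ z, ruelle g (C.indicator (fun _ => (1 : ℝ))) z = (Tw g (ind C) z).toReal := by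
      intro z
      rw [← e1]
      refine ruelle_eq_toReal _ _ _ (fun y => Set.indicator_nonneg (by simp) _) ?_
      rw [e1]; exact ne_top_of_le_ne_top (E_ne_top B) (hbd z)
    have hmeas : Measurable (Tw g (ind C)) :=
      Tw_measurable hg.measurable (measurable_ind (measurableSet_cyl _ _))
    simp_rw [e2] at h1
    rw [integral_toReal hmeas.aemeasurable
      (Eventually.of_forall fun z => lt_of_le_of_lt (hbd z) (E_ne_top B).lt_top),
      integral_indicator_const _ (measurableSet_cyl _ _)] at h1
    have hfin : ∫⁻ z, Tw g (ind C) z ∂ν ≠ ∞ := by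
      refine ne_top_of_le_ne_top (E_ne_top B) ?_
      calc _ ≤ ∫⁻ _, E B ∂ν := lintegral_mono hbd
        _ = E B := by simp
    rw [← ENNReal.ofReal_toReal hfin, h1, ENNReal.ofReal_mul (Real.exp_pos _).le]
    simp [E, Measure.real, hC]
  have hmeq : pushM g ν = E p • ν := by
    symm
    refine meas_ext (fun x n => ?_) fun x n => ?_
    · simp only [Measure.smul_apply, smul_eq_mul]
      exact ENNReal.mul_ne_top (E_ne_top _) (measure_ne_top _ _)
    · rw [← lintegral_ind (pushM g ν) (measurableSet_cyl _ _),
        lintegral_pushM g hg.measurable ν (measurable_ind (measurableSet_cyl _ _)), key]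
      rfl
  rw [← lintegral_pushM g hg.measurable ν hu, hmeq, lintegral_smul_measure]
  rfl

section abstractMeasure

variable {g : MarkovShift A → ℝ} {ν : Measure (MarkovShift A)}

theorem lintegral_iter (hg : Measurable g)
    (hT : ∀ u : MarkovShift A → ℝ≥0∞, Measurable u → ∫⁻ x, Tw g u x ∂ν = ∫⁻ x, u x ∂ν)
    (k : ℕ) {u : MarkovShift A → ℝ≥0∞} (hu : Measurable u) :
    ∫⁻ x, (Tw g)^[k] u x ∂ν = ∫⁻ x, u x ∂ν := by
  induction k generalizing u with
  | zero => rfl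
  | succ k ih => rw [Function.iterate_succ_apply, ih (Tw_measurable hg hu), hT u hu]

theorem pos_step (hg : Measurable g)
    (hT : ∀ u : MarkovShift A → ℝ≥0∞, Measurable u → ∫⁻ x, Tw g u x ∂ν = ∫⁻ x, u x ∂ν)
    (y : MarkovShift A) (m : ℕ) (h : ν (cylOf y (m + 2)) = 0) : ν (cylOf (shift y) (m + 1)) = 0 := by
  have hm := measurable_ind (measurableSet_cyl y (m + 2))
  have h1 := hT _ hm
  rw [lintegral_ind ν (measurableSet_cyl _ _), h, lintegral_eq_zero_iff (Tw_measurable hg hm)] at h1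
  have h2 : ∀ᵐ z ∂ν, z ∉ cylOf (shift y) (m + 1) := by
    filter_upwards [h1] with z hz hmem
    have h3 : Nop (ind (cylOf y (m + 2))) z = 1 := by
      rw [Nop_cyl]; simp [ind, hmem]
    have h4 : Nop (ind (cylOf y (m + 2))) z = 0 := by
      simp only [Pi.zero_apply] at hz
      rw [Tw, Nop, ENNReal.tsum_eq_zero] at hz
      rw [Nop, ENNReal.tsum_eq_zero]
      intro a
      have := hz a
      by_cases ha : A a (z.1 0) = true
      · simp only [ha, if_true] at this ⊢
        exact (mul_eq_zero.1 this).resolve_left (E_ne_zero _)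
      · simp [ha]
    rw [h3] at h4; exact one_ne_zero h4
  rw [ae_iff] at h2
  simpa using h2

theorem full_support (hmix : TopologicallyMixing A) (hg : Measurable g)
    (hT : ∀ u : MarkovShift A → ℝ≥0∞, Measurable u → ∫⁻ x, Tw g u x ∂ν = ∫⁻ x, u x ∂ν)
    [IsProbabilityMeasure ν] (x : MarkovShift A) (n : ℕ) : ν (cylOf x (n + 1)) ≠ 0 := by
  intro h0
  obtain ⟨b, hb⟩ : ∃ b : MarkovShift A, ν (cylOf b 1) ≠ 0 := by
    by_contra! hcon
    have : ν = 0 := by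
      refine meas_ext (fun x n => measure_ne_top _ _) fun x n => ?_
      exact measure_mono_null (cyl_anti x (by omega)) (hcon x)
    exact IsProbabilityMeasure.ne_zero ν this
  have hsteps : ∀ (k m : ℕ) (y : MarkovShift A), ν (cylOf y (k + (m + 1))) = 0 →
      ν (cylOf (shift^[k] y) (m + 1)) = 0 := by
    intro k m
    induction k with
    | zero => intro y hy; simpa using hy
    | succ k ih =>
      intro y hy
      rw [Function.iterate_succ_apply]
      refine ih _ (pos_step hg hT y (k + m) ?_)
      rwa [show k + 1 + (m + 1) = k + m + 2 by ring] at hy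
  obtain ⟨N, hN⟩ := hmix (x.1 n) (b.1 0) ⟨shift^[n] x, by rw [iter_val]; simp⟩ ⟨b, rfl⟩
  obtain ⟨z, hz0, hzN⟩ := hN N le_rfl
  have hs : x.1 n = z.1 0 := hz0.symm
  set y := splice x n z hs with hy
  have hyx : y ∈ cylOf x (n + 1) := splice_agree hs (by
    intro i hi
    rw [iter_val]
    obtain rfl : i = 0 := by omega
    simpa using hs)
  have h1 : ν (cylOf y (n + N + (0 + 1))) = 0 := by
    refine measure_mono_null ?_ h0
    rw [← cyl_eq_of_mem hyx]
    exact cyl_anti y (by omega)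
  have h2 := hsteps (n + N) 0 y h1
  apply hb
  have h3 : shift^[n + N] y ∈ cylOf b 1 := by
    intro i hi
    obtain rfl : i = 0 := by omega
    rw [add_comm, Function.iterate_add_apply, iter_splice, hzN]
  rwa [cyl_eq_of_mem h3] at h2

theorem h_reg (hmix : TopologicallyMixing A) (hg : Measurable g)
    (hT : ∀ u : MarkovShift A → ℝ≥0∞, Measurable u → ∫⁻ x, Tw g u x ∂ν = ∫⁻ x, u x ∂ν)
    [IsProbabilityMeasure ν] (H : MarkovShift A → ℝ≥0∞) (hH : Continuous H)
    (hfin : ∫⁻ x, H x ∂ν ≠ ∞)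
    (hHT : Tw g H = H) (k : ℕ) (hk : 1 ≤ k) (M : ℝ)
    (hM : ∀ n : ℕ, ∀ y y' : MarkovShift A, y' ∈ cylOf y (n + k) →
      birkhoff g n y ≤ M + birkhoff g n y')
    (x x' : MarkovShift A) (hx : x' ∈ cylOf x k) : H x ≤ E M * H x' := by
  let hn : ℕ → MarkovShift A → ℝ≥0∞ := fun n x => ⨅ y ∈ cylOf x n, H y
  have hn_congr : ∀ n x y, y ∈ cylOf x n → hn n y = hn n x := by
    intro n x y h
    simp only [hn, cyl_eq_of_mem h]
  have hn_meas : ∀ n, Measurable (hn n) := by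
    intro n
    refine Continuous.measurable (IsLocallyConstant.continuous ?_)
    rw [IsLocallyConstant.iff_eventually_eq]
    intro x
    filter_upwards [(isOpen_cyl x n).mem_nhds (mem_cyl_self x n)] with y hy
    exact hn_congr n x y hy
  have hn_le : ∀ n, hn n ≤ H := fun n x => iInf₂_le x (mem_cyl_self x n)
  have hn_mono : Monotone hn := by
    intro n m hnm x
    exact le_iInf₂ fun y hy => iInf₂_le y (cyl_anti x hnm hy)
  have hn_sup : ∀ x, ⨆ n, hn n x = H x := by
    intro x
    apply le_antisymm (iSup_le fun n => hn_le n x)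
    refine le_of_forall_lt fun c hc => ?_
    obtain ⟨c', hcc', hc'⟩ := exists_between hc
    obtain ⟨n, hsub⟩ := exists_cyl_subset (hH.continuousAt.eventually (lt_mem_nhds hc'))
    refine lt_of_lt_of_le hcc' (le_trans ?_ (le_iSup _ (n + 1)))
    exact le_iInf₂ fun y hy => (hsub hy).le
  by_contra! hlt
  obtain ⟨c', hc1, hc2⟩ := exists_between hlt
  set c := E M * H x' with hc
  have hcfin : c ≠ ∞ := ne_top_of_lt hc1
  set U := cylOf x k ∩ H ⁻¹' (Set.Ioi c') with hU
  have hUo : IsOpen U := (isOpen_cyl x k).inter (isOpen_Ioi.preimage hH)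
  have hνU : ν U ≠ 0 := by
    obtain ⟨n, hsub⟩ := exists_cyl_subset (hUo.mem_nhds (show x ∈ U from ⟨mem_cyl_self x k, hc2⟩))
    intro h0
    exact full_support hmix hg hT x n (measure_mono_null hsub h0)
  have hbound : ∀ n, ∫⁻ x, hn n x ∂ν + (c' - c) * ν U ≤ ∫⁻ x, H x ∂ν := by
    intro n
    have hφm := Tw_iter_measurable hg n (hn_meas n)
    rw [← lintegral_iter hg hT n (hn_meas n), ← lintegral_ind ν hUo.measurableSet,
      ← lintegral_const_mul _ (measurable_ind hUo.measurableSet),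
      ← lintegral_add_left hφm]
    refine lintegral_mono fun u => ?_
    have hφH : (Tw g)^[n] (hn n) ≤ H := by
      have := Tw_iter_mono (w := g) n (hn_le n)
      rwa [Function.iterate_fixed hHT] at this
    by_cases hu : u ∈ U
    · have hcmp : (Tw g)^[n] (hn n) u ≤ E M * (Tw g)^[n] (hn n) x' := by
        rw [twist_Nop]
        apply Nop_iter_compare
        · rw [hu.1 0 hk, hx 0 hk]
        · intro y y' hy hy' hag
          have hag' : y' ∈ cylOf y (n + k) := by
            intro i hi
            by_cases hin : i < n
            · exact hag i hin
            · have e1 := iter_val n y (i - n)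
              have e2 := iter_val n y' (i - n)
              rw [hy, Nat.sub_add_cancel (by omega)] at e1
              rw [hy', Nat.sub_add_cancel (by omega)] at e2
              rw [← e1, ← e2, hu.1 _ (by omega), hx _ (by omega)]
          rw [hn_congr n y y' hag, ← mul_assoc, ← E_add]
          gcongr
          exact E_mono (hM n y y' hag')
      have hle : (Tw g)^[n] (hn n) u ≤ c := hcmp.trans (by rw [hc]; gcongr; exact hφH x')
      have : ind U u = 1 := by simp [ind, hu]
      rw [this, mul_one]
      calc _ ≤ c + (c' - c) := by gcongr
        _ = c' := add_tsub_cancel_of_le hc1.le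
        _ ≤ H u := hu.2.le
    · have : ind U u = 0 := by simp [ind, hu]
      rw [this, mul_zero, add_zero]
      exact hφH u
  have hlim : ∫⁻ x, H x ∂ν = ⨆ n, ∫⁻ x, hn n x ∂ν := by
    rw [← lintegral_iSup hn_meas hn_mono]
    simp only [hn_sup]
  have hpos : (c' - c) * ν U ≠ 0 := mul_ne_zero (tsub_pos_of_lt hc1).ne' hνU
  have hfinal : ∫⁻ x, H x ∂ν + (c' - c) * ν U ≤ ∫⁻ x, H x ∂ν := by
    conv_lhs => rw [hlim]
    rw [ENNReal.iSup_add]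
    exact iSup_le hbound
  have : (c' - c) * ν U ≤ 0 := by
    have := ENNReal.le_sub_of_add_le_left hfin hfinal
    simpa using this
  exact hpos (le_antisymm this zero_le)

theorem pres_of_Tw (hg : Measurable g)
    (hT : ∀ u : MarkovShift A → ℝ≥0∞, Measurable u → ∫⁻ x, Tw g u x ∂ν = ∫⁻ x, u x ∂ν)
    (h1 : ∀ x, Tw g (fun _ => 1) x = 1) (j : ℕ) {S : Set (MarkovShift A)} (hS : MeasurableSet S) :
    ν (shift^[j] ⁻¹' S) = ν S := by
  induction j with
  | zero => rfl
  | succ j ih =>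
    rw [← ih]
    set S' := shift^[j] ⁻¹' S with hS'
    have hS'm : MeasurableSet S' := (continuous_iter j).measurable hS
    have e : shift^[j + 1] ⁻¹' S = shift ⁻¹' S' := by
      ext x; simp [hS', Function.iterate_succ_apply]
    rw [e, ← lintegral_ind ν hS'm, ← lintegral_ind ν (continuous_shift.measurable hS'm), ← hT _
      (measurable_ind (continuous_shift.measurable hS'm))]
    congr 1
    funext x
    have := Tw_mul_shift g (fun _ => 1) (ind S') x
    rw [h1] at this
    simp only [mul_one] at this
    exact this

theorem cyl_lower (hg : Measurable g)
    (hT : ∀ u : MarkovShift A → ℝ≥0∞, Measurable u → ∫⁻ x, Tw g u x ∂ν = ∫⁻ x, u x ∂ν)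
    (x : MarkovShift A) (k n : ℕ) (t : ℝ)
    (ht : ∀ y ∈ cylOf x (k + (n + 1)), t ≤ birkhoff g k y) :
    E t * ν (cylOf (shift^[k] x) (n + 1)) ≤ ν (cylOf x (k + (n + 1))) := by
  rw [← lintegral_ind ν (measurableSet_cyl x _), ← lintegral_ind ν (measurableSet_cyl _ (n + 1)),
    ← lintegral_iter hg hT k (measurable_ind (measurableSet_cyl x _)),
    ← lintegral_const_mul _ (measurable_ind (measurableSet_cyl _ _))]
  refine lintegral_mono fun z => ?_
  rw [twist_Nop, ← Nop_iter_cyl]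
  have e : (Nop : (MarkovShift A → ℝ≥0∞) → _) = Tw (fun _ => 0) := by funext u; rw [Tw_zero]
  rw [e]
  have := Tw_iter_const_mul (fun _ => 0) (E t) k (ind (cylOf x (k + (n + 1))))
  rw [← congrFun this z]
  refine Tw_iter_mono k (fun y => ?_) z
  by_cases hy : y ∈ cylOf x (k + (n + 1))
  · gcongr; exact E_mono (ht y hy)
  · simp [ind, hy]

theorem cyl_upper (hg : Measurable g)
    (hT : ∀ u : MarkovShift A → ℝ≥0∞, Measurable u → ∫⁻ x, Tw g u x ∂ν = ∫⁻ x, u x ∂ν)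
    (x : MarkovShift A) (k n : ℕ) (t : ℝ)
    (ht : ∀ y ∈ cylOf x (k + (n + 1)), birkhoff g k y ≤ t) :
    ν (cylOf x (k + (n + 1))) ≤ E t * ν (cylOf (shift^[k] x) (n + 1)) := by
  rw [← lintegral_ind ν (measurableSet_cyl x _), ← lintegral_ind ν (measurableSet_cyl _ (n + 1)),
    ← lintegral_iter hg hT k (measurable_ind (measurableSet_cyl x _)),
    ← lintegral_const_mul _ (measurable_ind (measurableSet_cyl _ _))]
  refine lintegral_mono fun z => ?_
  rw [twist_Nop, ← Nop_iter_cyl]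
  have e : (Nop : (MarkovShift A → ℝ≥0∞) → _) = Tw (fun _ => 0) := by funext u; rw [Tw_zero]
  rw [e]
  have := Tw_iter_const_mul (fun _ => 0) (E t) k (ind (cylOf x (k + (n + 1))))
  rw [← congrFun this z]
  refine Tw_iter_mono k (fun y => ?_) z
  by_cases hy : y ∈ cylOf x (k + (n + 1))
  · gcongr; exact E_mono (ht y hy)
  · simp [ind, hy]

theorem Tw_iter_one_le {w : MarkovShift A → ℝ} {Q : ℝ≥0∞} (h : ∀ x, Tw w (fun _ => 1) x ≤ Q)
    (k : ℕ) (x : MarkovShift A) : (Tw w)^[k] (fun _ => 1) x ≤ Q ^ k := by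
  induction k generalizing x with
  | zero => simp
  | succ k ih =>
    rw [Function.iterate_succ_apply]
    have h' : Tw w (fun _ => 1) ≤ fun _ => Q * 1 := fun y => by simpa using h y
    refine (Tw_iter_mono k h' x).trans ?_
    rw [Tw_iter_const_mul, pow_succ']
    exact mul_le_mul_right (ih x) _

/-- large-deviation upper bound -/
theorem set_upper (R : MarkovShift A → ℝ) (hR : Measurable R) (β : ℝ) (hβ : 1 ≤ β)
    [IsProbabilityMeasure ν]
    (hT : ∀ u : MarkovShift A → ℝ≥0∞, Measurable u →
      ∫⁻ x, Tw (fun y => -β * R y) u x ∂ν = ∫⁻ x, u x ∂ν)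
    (Q : ℝ≥0∞) (hQ : ∀ x, Tw (fun y => - R y) (fun _ => 1) x ≤ Q)
    (k : ℕ) (t : ℝ) (S : Set (MarkovShift A)) (hS : MeasurableSet S)
    (ht : ∀ y ∈ S, t ≤ birkhoff R k y) : ν S ≤ E (-(β - 1) * t) * Q ^ k := by
  have hm : Measurable fun y => -β * R y := hR.const_mul _
  rw [← lintegral_ind ν hS, ← lintegral_iter hm hT k (measurable_ind hS)]
  calc _ ≤ ∫⁻ _, E (-(β - 1) * t) * Q ^ k ∂ν := by
        refine lintegral_mono fun x => ?_
        have h1 : ind S ≤ fun y => E (-(β - 1) * t) *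
            (E (birkhoff (fun y => (β - 1) * R y) k y) * 1) := by
          intro y
          by_cases hy : y ∈ S
          · beta_reduce
            rw [mul_one, ← E_add]
            have : birkhoff (fun y => (β - 1) * R y) k y = (β - 1) * birkhoff R k y := by
              simp [birkhoff, Finset.mul_sum]
            rw [this]
            have h2 : ind S y = E 0 := by simp [ind, hy, E_zero]
            rw [h2]
            apply E_mono
            nlinarith [ht y hy]
          · simp [ind, hy]
        refine (Tw_iter_mono k h1 x).trans ?_
        rw [Tw_iter_const_mul, twist]
        refine mul_le_mul_right ?_ _
        have e : (fun y => -β * R y + (β - 1) * R y) = fun y => - R y := by funext y; ring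
        rw [e]
        exact Tw_iter_one_le hQ k x
    _ = _ := by simp

end abstractMeasure

end MarkovShift

namespace MarkovShift
variable {A : ℕ → ℕ → Bool}

theorem connect_aux (F : Finset ℕ) (x : MarkovShift A) (w : List ℕ) (hw : ∀ c ∈ w, c ∈ F) :
    ∀ a : ℕ, List.IsChain (fun u v => A u v = true) (a :: (w ++ [x.1 0])) →
    ∃ z : MarkovShift A, z.1 0 = a ∧ shift^[w.length + 1] z = x ∧
      ∀ i, 1 ≤ i → i < w.length + 1 → z.1 i ∈ F := by
  induction w with
  | nil =>
    intro a h
    have h' : A a (x.1 0) = true := by simpa using h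
    exact ⟨pre a x, pre_zero h', shift_pre h', fun i h1 h2 => by simp at h2; omega⟩
  | cons b w ih =>
    intro a h
    rw [List.cons_append, List.isChain_cons_cons] at h
    obtain ⟨z, hz0, hz1, hz2⟩ := ih (fun c hc => hw c (by simp [hc])) b h.2
    have h' : A a (z.1 0) = true := by rw [hz0]; exact h.1
    refine ⟨pre a z, pre_zero h', ?_, ?_⟩
    · rw [List.length_cons, Function.iterate_succ_apply, shift_pre h', hz1]
    · intro i h1 h2
      obtain ⟨i, rfl⟩ : ∃ j, i = j + 1 := ⟨i - 1, by omega⟩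
      rw [pre_succ h']
      rcases Nat.eq_zero_or_pos i with rfl | hi
      · rw [hz0]; exact hw b (by simp)
      · exact hz2 i hi (by simp at h2; omega)

theorem bip (h : FinitelyPrimitive A) : ∃ (K : ℕ) (F : Finset ℕ), 1 ≤ K ∧
    ∀ a, Admissible A a → ∀ x : MarkovShift A, ∃ z : MarkovShift A, z.1 0 = a ∧
      shift^[K] z = x ∧ ∀ i, 1 ≤ i → i < K → z.1 i ∈ F := by
  obtain ⟨K₀, F, hF⟩ := h
  refine ⟨K₀ + 1, F, by omega, fun a ha x => ?_⟩
  obtain ⟨w, hw, hwF, hc⟩ := hF a (x.1 0) ha ⟨x, rfl⟩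
  subst hw
  exact connect_aux F x w hwF a hc

theorem exists_period (z : MarkovShift A) (n : ℕ) (hn : 1 ≤ n) (h : z.1 n = z.1 0) :
    ∃ p : MarkovShift A, shift^[n] p = p ∧ ∀ i < n, p.1 i = z.1 i := by
  refine ⟨⟨fun i => z.1 (i % n), fun i => ?_⟩, ?_, ?_⟩
  · show A (z.1 (i % n)) (z.1 ((i + 1) % n)) = true
    have h1 := Nat.mod_lt i hn
    have h2 : (i + 1) % n = (i % n + 1) % n := by simp [Nat.add_mod]
    by_cases h3 : i % n + 1 = n
    · rw [h2, h3, Nat.mod_self, ← h]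
      have := z.2 (i % n)
      rwa [h3] at this
    · rw [h2, Nat.mod_eq_of_lt (show i % n + 1 < n by omega)]
      exact z.2 _
  · apply ext'
    intro i
    refine (iter_val n _ i).trans ?_
    show z.1 ((i + n) % n) = z.1 (i % n)
    rw [Nat.add_mod_right]
  · intro i hi
    simp [Nat.mod_eq_of_lt hi]

theorem fin_bound (f : MarkovShift A → ℝ) (v : ℝ)
    (hv : ∀ x y : MarkovShift A, x.1 0 = y.1 0 → |f x - f y| ≤ v) (G : Finset ℕ) :
    ∃ B, 0 ≤ B ∧ ∀ y : MarkovShift A, y.1 0 ∈ G → |f y| ≤ B := by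
  have h1 : ∀ a : ℕ, ∃ B, 0 ≤ B ∧ ∀ y : MarkovShift A, y.1 0 = a → |f y| ≤ B := by
    intro a
    by_cases ha : ∃ x : MarkovShift A, x.1 0 = a
    · obtain ⟨x, hx⟩ := ha
      have hv0 : 0 ≤ v := (abs_nonneg _).trans (hv x x rfl)
      refine ⟨|f x| + v, by positivity, fun y hy => ?_⟩
      have := hv y x (hy.trans hx.symm)
      have := abs_sub_abs_le_abs_sub (f y) (f x)
      linarith
    · exact ⟨0, le_rfl, fun y hy => absurd ⟨y, hy⟩ ha⟩
  choose B hB0 hB using h1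
  refine ⟨∑ a ∈ G, B a, Finset.sum_nonneg fun a _ => hB0 a, fun y hy => (hB _ y rfl).trans ?_⟩
  exact Finset.single_le_sum (f := B) (fun a _ => hB0 a) hy

theorem summ (f : MarkovShift A → ℝ) (v : ℝ)
    (hv : ∀ x y : MarkovShift A, x.1 0 = y.1 0 → |f x - f y| ≤ v)
    (K : ℕ) (F : Finset ℕ) (hK : 1 ≤ K)
    (hF : ∀ a, Admissible A a → ∀ x : MarkovShift A, ∃ z : MarkovShift A, z.1 0 = a ∧
      shift^[K] z = x ∧ ∀ i, 1 ≤ i → i < K → z.1 i ∈ F)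
    (x0 : MarkovShift A) (p : ℝ) (hp : HasGurevichPressure f p) :
    ∃ s : ℕ → ℝ, Summable (fun a => Real.exp (s a)) ∧ ∀ x : MarkovShift A, f x ≤ s (x.1 0) := by
  set a := x0.1 0 with ha
  have key : ∀ b, Admissible A b → ∃ q : MarkovShift A, shift^[2 * K] q = q ∧ q.1 0 = a ∧
      q.1 K = b ∧ ∀ i < 2 * K, i ≠ K → q.1 i ∈ insert a F := by
    intro b hb
    obtain ⟨z, hz0, hz1, hz2⟩ := hF b hb x0
    obtain ⟨z', hz0', hz1', hz2'⟩ := hF a ⟨x0, rfl⟩ z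
    have e1 : ∀ i, z'.1 (i + K) = z.1 i := fun i => by rw [← hz1', iter_val]
    have e2 : z.1 K = a := by rw [ha, ← hz1, iter_val]; simp
    obtain ⟨q, hq1, hq2⟩ := exists_period z' (2 * K) (by omega) (by
      rw [two_mul, e1, e2, hz0'])
    refine ⟨q, hq1, ?_, ?_, ?_⟩
    · rw [hq2 0 (by omega), hz0']
    · rw [hq2 K (by omega)]
      have := e1 0
      simp only [zero_add] at this
      rw [this, hz0]
    · intro i hi hne
      rw [hq2 i hi]
      rcases Nat.eq_zero_or_pos i with rfl | hi0
      · rw [hz0']; simp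
      · rcases lt_or_gt_of_ne hne with h | h
        · exact Finset.mem_insert_of_mem (hz2' i hi0 h)
        · have := e1 (i - K)
          rw [Nat.sub_add_cancel h.le] at this
          rw [this]
          exact Finset.mem_insert_of_mem (hz2 _ (by omega) (by omega))
  haveI : Nonempty (MarkovShift A) := ⟨x0⟩
  choose! q hq1 hq2 hq3 hq4 using key
  obtain ⟨B, hB0, hB⟩ := fin_bound f v hv (insert a F)
  have hlow : ∀ x : MarkovShift A, f x - v - (2 * K : ℕ) * B ≤ birkhoff f (2 * K) (q (x.1 0)) := by
    intro x
    have hadm : Admissible A (x.1 0) := ⟨x, rfl⟩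
    have h1 : ∀ j ∈ Finset.range (2 * K),
        (if j = K then f x - v else 0) - B ≤ f (shift^[j] (q (x.1 0))) := by
      intro j hj
      by_cases hjK : j = K
      · subst hjK
        have := hv (shift^[j] (q (x.1 0))) x (by rw [iter_val, zero_add]; exact hq3 _ hadm)
        rw [abs_le] at this
        simp only [if_true]; linarith
      · have := hB (shift^[j] (q (x.1 0))) (by
          rw [iter_val, zero_add]; exact hq4 _ hadm j (Finset.mem_range.1 hj) hjK)
        rw [abs_le] at this
        simp only [hjK, if_false]; linarith
    have h2 := Finset.sum_le_sum h1
    rw [Finset.sum_sub_distrib, Finset.sum_ite_eq'] at h2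
    simp only [Finset.mem_range, Finset.sum_const, Finset.card_range, nsmul_eq_mul] at h2
    rw [if_pos (by omega)] at h2
    exact h2
  classical
  set C : ℝ := v + (2 * K : ℕ) * B
  refine ⟨fun b => if Admissible A b then birkhoff f (2 * K) (q b) + C else -b, ?_, ?_⟩
  · have hs := ((hp a ⟨x0, rfl⟩).1 (2 * K) (by omega))
    let ι : {b // Admissible A b} → {x : MarkovShift A // shift^[2 * K] x = x ∧ x.1 0 = a} :=
      fun b => ⟨q b.1, hq1 _ b.2, hq2 _ b.2⟩
    have hι : Function.Injective ι := by
      intro b b' hbb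
      have : q b.1 = q b'.1 := congrArg Subtype.val hbb
      apply Subtype.ext
      rw [← hq3 _ b.2, ← hq3 _ b'.2, this]
    have h1 := (hs.comp_injective hι).mul_left (Real.exp C)
    have h2 : Summable (Set.indicator {b | Admissible A b}
        fun b => Real.exp C * Real.exp (birkhoff f (2 * K) (q b))) :=
      summable_subtype_iff_indicator.1 h1
    refine Summable.of_nonneg_of_le (fun _ => (Real.exp_pos _).le) (fun b => ?_)
      (h2.add Real.summable_exp_neg_nat)
    beta_reduce
    by_cases hb : Admissible A b
    · rw [if_pos hb, Set.indicator_of_mem (by exact hb), add_comm, Real.exp_add]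
      exact le_add_of_nonneg_right (Real.exp_pos _).le
    · rw [if_neg hb, Set.indicator_of_notMem (by exact hb), zero_add]
  · intro x
    have hadm : Admissible A (x.1 0) := ⟨x, rfl⟩
    simp only [hadm, if_true]
    have := hlow x
    simp only [C]; linarith

/-- Derived data of the potential. -/
structure Ctx (A : ℕ → ℕ → Bool) (f : MarkovShift A → ℝ) where
  M : ℕ → ℝ
  hM : ∀ k, 1 ≤ k → ∀ n, ∀ y y' : MarkovShift A, y' ∈ cylOf y (n + k) →
    |birkhoff f n y - birkhoff f n y'| ≤ M k
  hM0 : ∀ k, 0 ≤ M k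
  hMlim : Tendsto M atTop (𝓝 0)
  v : ℝ
  hv : ∀ x y : MarkovShift A, x.1 0 = y.1 0 → |f x - f y| ≤ v
  K : ℕ
  F : Finset ℕ
  hK : 1 ≤ K
  hF : ∀ a, Admissible A a → ∀ x : MarkovShift A, ∃ z : MarkovShift A, z.1 0 = a ∧
      shift^[K] z = x ∧ ∀ i, 1 ≤ i → i < K → z.1 i ∈ F
  x0 : MarkovShift A
  hx0 : x0.1 0 ∈ F
  s : ℕ → ℝ
  hs : Summable (fun a => Real.exp (s a))
  hfs : ∀ x : MarkovShift A, f x ≤ s (x.1 0)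
  hf : Continuous f
  hmix : TopologicallyMixing A

theorem cont_of_var (g : MarkovShift A → ℝ) (M : ℕ → ℝ) (hM : Tendsto M atTop (𝓝 0)) (N : ℕ)
    (h : ∀ k, N ≤ k → ∀ y y' : MarkovShift A, y' ∈ cylOf y k → |g y - g y'| ≤ M k) :
    Continuous g := by
  rw [continuous_iff_continuousAt]
  intro x
  rw [ContinuousAt, Metric.tendsto_nhds]
  intro ε hε
  have h1 := ((hM.eventually (gt_mem_nhds hε)).and (eventually_ge_atTop N)).exists
  obtain ⟨k, hk, hkN⟩ := h1
  filter_upwards [(isOpen_cyl x k).mem_nhds (mem_cyl_self x k)] with y hy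
  rw [Real.dist_eq]
  exact (h k hkN y x (mem_cyl_comm.1 hy)).trans_lt hk

theorem exists_ctx (hmix : TopologicallyMixing A) (hbip : FinitelyPrimitive A)
    (f : MarkovShift A → ℝ) (hW : SatisfiesWalters f) (hV : Var1Finite f) (p : ℝ)
    (hp : HasGurevichPressure f p) (x0 : MarkovShift A) : Nonempty (Ctx A f) := by
  obtain ⟨K, F, hK, hF⟩ := bip hbip
  obtain ⟨v, hv⟩ := hV
  have hv' : ∀ x y : MarkovShift A, x.1 0 = y.1 0 → |f x - f y| ≤ v := fun x y hxy =>
    hv ⟨x, y, fun i hi => by rw [Nat.lt_one_iff.1 hi, hxy], by simp [birkhoff_one]⟩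
  obtain ⟨s, hs, hfs⟩ := summ f v hv' K F hK hF x0 p hp
  have hM : ∀ k, 1 ≤ k → ∀ n, ∀ y y' : MarkovShift A, y' ∈ cylOf y (n + k) →
    |birkhoff f n y - birkhoff f n y'| ≤ |waltersSup f k| := by
    intro k hk n y y' hy
    rcases Nat.eq_zero_or_pos n with rfl | hn
    · simp [birkhoff_zero]
    · exact (le_csSup (hW.1 k hk) ⟨n, hn, y, y', fun i hi => (hy i hi).symm, rfl⟩).trans
        (le_abs_self _)
  have hlim : Tendsto (fun k => |waltersSup f k|) atTop (𝓝 0) := by simpa using hW.2.abs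
  refine ⟨⟨fun k => |waltersSup f k|, hM, fun k => abs_nonneg _, hlim, v, hv', K,
    insert (x0.1 0) F, hK, ?_, x0, by simp, s, hs, hfs, ?_, hmix⟩⟩
  · intro a ha x
    obtain ⟨z, h1, h2, h3⟩ := hF a ha x
    exact ⟨z, h1, h2, fun i hi hi' => Finset.mem_insert_of_mem (h3 i hi hi')⟩
  · refine cont_of_var f (fun k => |waltersSup f (k - 1)|)
      (hlim.comp (tendsto_sub_atTop_nat 1)) 2 ?_
    intro k hk y y' hy
    have := hM (k - 1) (by omega) 1 y y' (by rwa [Nat.add_sub_cancel' (by omega)])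
    simpa [birkhoff_one] using this

end MarkovShift

namespace MarkovShift
variable {A : ℕ → ℕ → Bool}

theorem E_le_iff {a b : ℝ} : E a ≤ E b ↔ a ≤ b := by
  rw [E, E, ENNReal.ofReal_le_ofReal_iff (Real.exp_pos _).le, Real.exp_le_exp]

theorem E_log {r : ℝ} (h : 0 < r) : E (Real.log r) = ENNReal.ofReal r := by
  rw [E, Real.exp_log h]

theorem birkhoff_affine (f : MarkovShift A → ℝ) (b p : ℝ) (n : ℕ) (y : MarkovShift A) :
    birkhoff (fun y => b * f y - p) n y = b * birkhoff f n y - n * p := by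
  simp [birkhoff, Finset.mul_sum]

theorem Tw_sub_const (w : MarkovShift A → ℝ) (p : ℝ) (u : MarkovShift A → ℝ≥0∞)
    (x : MarkovShift A) : Tw (fun y => w y - p) u x = E (-p) * Tw w u x := by
  unfold Tw
  rw [← Nop_const_mul]
  refine Nop_congr fun y _ => ?_
  beta_reduce
  rw [sub_eq_add_neg, add_comm, E_add, mul_assoc]

theorem tsum_E_ne_top {s : ℕ → ℝ} (hs : Summable fun a => Real.exp (s a)) :
    ∑' a, E (s a) ≠ ∞ := hs.tsum_ofReal_ne_top

theorem Nop_sum_le {s : ℕ → ℝ} (w : MarkovShift A → ℝ) (d : ℝ) (hw : ∀ y, w y ≤ s (y.1 0) + d)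
    (x : MarkovShift A) : Nop (fun y => E (w y)) x ≤ E d * ∑' a, E (s a) := by
  rw [← ENNReal.tsum_mul_left]
  refine ENNReal.tsum_le_tsum fun a => ?_
  by_cases h : A a (x.1 0) = true
  · simp only [h, if_true]
    rw [← E_add]
    apply E_mono
    have := hw (pre a x)
    rw [pre_zero h] at this
    linarith
  · simp [h]

/-- normalised family -/
structure Fam {f : MarkovShift A → ℝ} (c : Ctx A f) (m : ℝ) where
  p : ℝ → ℝ
  W : ℝ → MarkovShift A → ℝ
  μ : ℝ → Measure (MarkovShift A)
  C : ℝ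
  hC0 : 0 ≤ C
  hp : Tendsto p atTop (𝓝 m)
  hpm : ∀ β, 2 ≤ β → m ≤ p β
  hW : ∀ β, 2 ≤ β → ∀ k, 1 ≤ k → ∀ x x' : MarkovShift A, x' ∈ cylOf x k →
    |W β x - W β x'| ≤ c.M k
  hC : ∀ β, 2 ≤ β → ∀ x y, |W β x - W β y| ≤ C
  hprob : ∀ β, 2 ≤ β → IsProbabilityMeasure (μ β)
  hT : ∀ β, 2 ≤ β → ∀ u : MarkovShift A → ℝ≥0∞, Measurable u →
    ∫⁻ x, Tw (fun y => -β * (-f y - W β y + W β (shift y) + p β)) u x ∂(μ β) = ∫⁻ x, u x ∂(μ β)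
  h1 : ∀ β, 2 ≤ β → ∀ x,
    Tw (fun y => -β * (-f y - W β y + W β (shift y) + p β)) (fun _ => 1) x = 1

section fixed
variable {f : MarkovShift A → ℝ}

theorem transfer' (c : Ctx A f) {β P : ℝ} (hβ : 2 ≤ β) {h : MarkovShift A → ℝ} {ν : Measure (MarkovShift A)}
    (hr : IsRPF (fun x => β * f x) P h ν) {u : MarkovShift A → ℝ≥0∞} (hu : Measurable u) :
    ∫⁻ x, Tw (fun y => β * f y) u x ∂ν = E P * ∫⁻ x, u x ∂ν := by
  obtain ⟨hc, hpos, heig, hprob, hdual, hhi⟩ := hr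
  refine transfer (fun y => β * f y) (continuous_const.mul c.hf) (fun a => ⟨β * c.s a, ?_⟩) P ν hdual hu
  intro y hy
  have := c.hfs y
  rw [hy] at this
  exact mul_le_mul_of_nonneg_left this (by linarith)

theorem pressure (c : Ctx A f) {V : MarkovShift A → ℝ} (hV : IsCalibratedSubaction f V) :
    ∃ L : ℝ, ∀ β P h ν, 2 ≤ β → IsRPF (fun x => β * f x) P h ν →
      β * mf f ≤ P ∧ P ≤ β * mf f + L := by
  obtain ⟨hVc, ⟨CV, hCV⟩, hVs, hVcal⟩ := hV
  set Q := E (2 * CV - mf f) * ∑' a, E (c.s a) with hQ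
  have hQt : Q ≠ ∞ := ENNReal.mul_ne_top (E_ne_top _) (tsum_E_ne_top c.hs)
  have hQ0 : Q ≠ 0 := mul_ne_zero (E_ne_zero _) (by
    intro h
    exact E_ne_zero _ (ENNReal.tsum_eq_zero.1 h 0))
  refine ⟨Real.log Q.toReal, fun β P h ν hβ hr => ?_⟩
  have hprob := hr.2.2.2.1
  have hum : Measurable fun y => E (β * V y) := measurable_E.comp (hVc.measurable.const_mul β)
  have ht := transfer' c hβ hr hum
  have e : ∀ x, Tw (fun y => β * f y) (fun y => E (β * V y)) x = E (β * mf f) * (E (β * V x) *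
      Nop (fun y => E (-β * (-f y - V y + V (shift y) + mf f))) x) := by
    intro x
    rw [← Nop_mul_shift _ (fun y => E (β * V y)), ← Nop_const_mul]
    refine Nop_congr fun y _ => ?_
    rw [← E_add, ← E_add, ← E_add]
    congr 1; ring
  simp_rw [e] at ht
  have hR : ∀ y, 0 ≤ -f y - V y + V (shift y) + mf f := fun y => by linarith [hVs y]
  have hlow : ∀ x, 1 ≤ Nop (fun y => E (-β * (-f y - V y + V (shift y) + mf f))) x := by
    intro x
    obtain ⟨y, hy, hy2⟩ := hVcal x
    have h2 := le_Nop (fun y => E (-β * (-f y - V y + V (shift y) + mf f))) y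
    rw [hy] at h2
    refine le_trans ?_ h2
    rw [hy] at hy2
    beta_reduce
    rw [show -f y - V y + V x + mf f = 0 by linarith]
    simp [E_zero]
  have hup : ∀ x, Nop (fun y => E (-β * (-f y - V y + V (shift y) + mf f))) x ≤ Q := by
    intro x
    refine Nop_sum_le _ _ (fun y => ?_) x
    have h1 := abs_le.1 (hCV y)
    have h2 := abs_le.1 (hCV (shift y))
    have h3 := c.hfs y
    nlinarith [hR y]
  set I := ∫⁻ x, E (β * V x) ∂ν with hI
  have hI0 : I ≠ 0 := by
    have : E (-(β * CV)) ≤ I := by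
      calc E (-(β * CV)) = ∫⁻ _, E (-(β * CV)) ∂ν := by simp
        _ ≤ I := lintegral_mono fun x => E_mono (by
            have h1 := abs_le.1 (hCV x)
            nlinarith)
    exact ((E_pos _).trans_le this).ne'
  have hIt : I ≠ ∞ := by
    refine ne_top_of_le_ne_top (E_ne_top (β * CV)) ?_
    calc I ≤ ∫⁻ _, E (β * CV) ∂ν := lintegral_mono fun x => E_mono (by
            have h1 := abs_le.1 (hCV x)
            nlinarith)
      _ = _ := by simp
  constructor
  · have h3 : E (β * mf f) * I ≤ E P * I := by
      rw [← ht, hI, ← lintegral_const_mul _ hum]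
      refine lintegral_mono fun x => mul_le_mul_right ?_ _
      simpa using mul_le_mul_right (hlow x) (E (β * V x))
    exact E_le_iff.1 ((ENNReal.mul_le_mul_iff_left hI0 hIt).1 h3)
  · have h3 : E P * I ≤ (E (β * mf f) * Q) * I := by
      rw [← ht, hI, ← lintegral_const_mul _ hum]
      refine lintegral_mono fun x => ?_
      rw [mul_assoc, mul_comm Q]
      exact mul_le_mul_right (mul_le_mul_right (hup x) _) _
    have h4 := (ENNReal.mul_le_mul_iff_left hI0 hIt).1 h3
    have h5 : Q = E (Real.log Q.toReal) := by
      rw [E_log (ENNReal.toReal_pos hQ0 hQt), ENNReal.ofReal_toReal hQt]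
    rw [h5, ← E_add] at h4
    exact E_le_iff.1 h4

theorem exists_fam (c : Ctx A f) {V : MarkovShift A → ℝ} (hV : IsCalibratedSubaction f V)
    (P : ℝ → ℝ) (h : ℝ → MarkovShift A → ℝ) (ν : ℝ → Measure (MarkovShift A))
    (hRPF : ∀ β : ℝ, 1 < β → IsRPF (fun x => β * f x) (P β) (h β) (ν β)) :
    ∃ Φ : Fam c (mf f), Φ.μ = fun β => gibbs (h β) (ν β) := by
  obtain ⟨L, hL⟩ := pressure c hV
  have hL' : ∀ β, 2 ≤ β → β * mf f ≤ P β ∧ P β ≤ β * mf f + L := fun β hβ =>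
    hL β _ _ _ hβ (hRPF β (by linarith))
  have hpm : ∀ β, 2 ≤ β → mf f ≤ P β / β := fun β hβ => by
    rw [le_div_iff₀ (by linarith), mul_comm]; exact (hL' β hβ).1
  have hpu : ∀ β, 2 ≤ β → P β / β ≤ mf f + L / β := fun β hβ => by
    rw [div_le_iff₀ (by linarith), add_mul, div_mul_cancel₀ _ (by linarith), mul_comm]
    exact (hL' β hβ).2
  have hL0 : 0 ≤ L := by linarith [(hL' 2 le_rfl).1, (hL' 2 le_rfl).2]
  have hpu' : ∀ β, 2 ≤ β → P β / β ≤ mf f + L := fun β hβ => (hpu β hβ).trans (by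
    have : L / β ≤ L := div_le_self hL0 (by linarith)
    linarith)
  have hp : Tendsto (fun β => P β / β) atTop (𝓝 (mf f)) := by
    refine tendsto_of_tendsto_of_tendsto_of_le_of_le' (h := fun β => mf f + L / β)
      tendsto_const_nhds ?_ ?_ ?_
    · simpa using (tendsto_const_nhds (x := mf f)).add (tendsto_const_nhds (x := L).div_atTop tendsto_id)
    · filter_upwards [eventually_ge_atTop 2] with β hβ using hpm β hβ
    · filter_upwards [eventually_ge_atTop 2] with β hβ using hpu β hβ
  set W : ℝ → MarkovShift A → ℝ := fun β x => Real.log (h β x) / β with hWdef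
  have hH : ∀ β, 2 ≤ β → ∀ x, ENNReal.ofReal (h β x) = E (β * W β x) := by
    intro β hβ x
    rw [hWdef]
    simp only
    rw [mul_div_cancel₀ _ (by linarith : β ≠ 0), E_log ((hRPF β (by linarith)).2.1 x)]
  have hPβ : ∀ β, 2 ≤ β → P β = β * (P β / β) := fun β hβ => by
    rw [mul_div_cancel₀ _ (by linarith : β ≠ 0)]
  have hHc : ∀ β, 2 ≤ β → Continuous fun x => E (β * W β x) := by
    intro β hβ
    have : (fun x => E (β * W β x)) = fun x => ENNReal.ofReal (h β x) := by
      funext x; rw [hH β hβ]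
    rw [this]
    exact ENNReal.continuous_ofReal.comp (hRPF β (by linarith)).1
  -- eigen equation
  have heig : ∀ β, 2 ≤ β → Tw (fun y => β * f y - P β) (fun x => E (β * W β x)) =
      fun x => E (β * W β x) := by
    intro β hβ
    obtain ⟨hc, hpos, heig, hprob, hdual, hhi⟩ := hRPF β (by linarith)
    funext x
    rw [Tw_sub_const]
    have h1 := ruelle_eq_of_pos (fun x => β * f x) (h β) x (fun y => (hpos y).le)
      (by rw [heig]; exact mul_pos (Real.exp_pos _) (hpos x))
    simp_rw [hH β hβ] at h1
    rw [← h1, heig, ENNReal.ofReal_mul (Real.exp_pos _).le, hH β hβ, ← E, ← mul_assoc,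
      mul_comm (E (-P β)), E_mul_neg, one_mul]
  have hTν : ∀ β, 2 ≤ β → ∀ u : MarkovShift A → ℝ≥0∞, Measurable u →
      ∫⁻ x, Tw (fun y => β * f y - P β) u x ∂(ν β) = ∫⁻ x, u x ∂(ν β) := by
    intro β hβ u hu
    simp_rw [Tw_sub_const]
    rw [lintegral_const_mul _ (Tw_measurable (c.hf.measurable.const_mul β) hu),
      transfer' c hβ (hRPF β (by linarith)) hu, ← mul_assoc, mul_comm (E (-P β)), E_mul_neg, one_mul]
  have hI : ∀ β, 2 ≤ β → ∫⁻ x, E (β * W β x) ∂(ν β) = 1 := by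
    intro β hβ
    obtain ⟨hc, hpos, heig, hprob, hdual, hhi⟩ := hRPF β (by linarith)
    have hi : Integrable (h β) (ν β) := by
      by_contra hni
      rw [integral_undef hni] at hhi
      exact zero_ne_one hhi
    have := ofReal_integral_eq_lintegral_ofReal hi (Eventually.of_forall fun x => (hpos x).le)
    rw [hhi] at this
    simp_rw [hH β hβ] at this
    rw [← this]; simp
  have hgm : ∀ β, Measurable fun y => β * f y - P β := fun β =>
    (c.hf.measurable.const_mul β).sub_const _
  -- regularity
  have hreg : ∀ β, 2 ≤ β → ∀ k, 1 ≤ k → ∀ x x' : MarkovShift A, x' ∈ cylOf x k →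
      W β x ≤ c.M k + W β x' := by
    intro β hβ k hk x x' hx
    have := (hRPF β (by linarith)).2.2.2.1
    have h1 := h_reg c.hmix (hgm β) (hTν β hβ) _ (hHc β hβ) (by rw [hI β hβ]; simp) (heig β hβ)
      k hk (β * c.M k) (by
        intro n y y' hy
        rw [birkhoff_affine, birkhoff_affine]
        have := (abs_le.1 (c.hM k hk n y y' hy)).2
        nlinarith) x x' hx
    rw [← E_add] at h1
    have h2 := E_le_iff.1 h1
    rw [← mul_add] at h2
    exact le_of_mul_le_mul_left h2 (by linarith)
  have hW : ∀ β, 2 ≤ β → ∀ k, 1 ≤ k → ∀ x x' : MarkovShift A, x' ∈ cylOf x k →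
      |W β x - W β x'| ≤ c.M k := by
    intro β hβ k hk x x' hx
    rw [abs_le]
    constructor
    · linarith [hreg β hβ k hk x' x (mem_cyl_comm.1 hx)]
    · linarith [hreg β hβ k hk x x' hx]
  -- normalisation
  have e1 : ∀ β, 2 ≤ β → ∀ u x, E (β * W β x) *
      Tw (fun y => -β * (-f y - W β y + W β (shift y) + P β / β)) u x =
      Tw (fun y => β * f y - P β) (fun y => E (β * W β y) * u y) x := by
    intro β hβ u x
    rw [← Tw_mul_shift _ u (fun x => E (β * W β x))]
    refine Nop_congr fun y _ => ?_
    rw [← mul_assoc, ← mul_assoc, ← E_add, ← E_add]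
    congr 2
    have := hPβ β hβ
    linear_combination this
  have h1 : ∀ β, 2 ≤ β → ∀ x,
      Tw (fun y => -β * (-f y - W β y + W β (shift y) + P β / β)) (fun _ => 1) x = 1 := by
    intro β hβ x
    have h2 := e1 β hβ (fun _ => 1) x
    simp only [mul_one] at h2
    rw [congrFun (heig β hβ) x] at h2
    have h3 : E (-(β * W β x)) * (E (β * W β x) *
      Tw (fun y => -β * (-f y - W β y + W β (shift y) + P β / β)) (fun _ => 1) x) =
      E (-(β * W β x)) * E (β * W β x) := by rw [h2]
    rw [← mul_assoc, mul_comm (E (-(β * W β x))), E_mul_neg, one_mul] at h3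
    exact h3
  have hR0 : ∀ β, 2 ≤ β → ∀ y, f y + W β y - P β / β ≤ W β (shift y) := by
    intro β hβ y
    have h2 := le_Nop (fun y => E (-β * (-f y - W β y + W β (shift y) + P β / β)) * 1) y
    have h3 := h1 β hβ (shift y)
    rw [Tw] at h3
    rw [h3] at h2
    simp only [mul_one] at h2
    rw [← E_zero, E_le_iff] at h2
    have : 0 ≤ -f y - W β y + W β (shift y) + P β / β := by
      by_contra hh
      push Not at hh
      nlinarith
    linarith
  have hRK : ∀ β, 2 ≤ β → ∀ n z, W β z + birkhoff f n z - n * (P β / β) ≤ W β (shift^[n] z) := by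
    intro β hβ n z
    induction n with
    | zero => simp [birkhoff_zero]
    | succ n ih =>
      rw [birkhoff_succ, Function.iterate_succ_apply']
      have := hR0 β hβ (shift^[n] z)
      push_cast
      linarith
  -- oscillation
  obtain ⟨B, hB0, hB⟩ := fin_bound f c.v c.hv c.F
  set D : ℝ := c.M 1 + c.K * (B + (mf f + L)) with hD
  have hlow : ∀ β, 2 ≤ β → ∀ x ξ : MarkovShift A, ξ.1 0 ∈ c.F → W β ξ ≤ W β x + D := by
    intro β hβ x ξ hξ
    obtain ⟨z, hz0, hz1, hz2⟩ := c.hF (ξ.1 0) ⟨ξ, rfl⟩ x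
    have h2 := hRK β hβ c.K z
    rw [hz1] at h2
    have h3 : -(c.K * B) ≤ birkhoff f c.K z := by
      have : ∑ _j ∈ Finset.range c.K, (-B) ≤ birkhoff f c.K z := by
        refine Finset.sum_le_sum fun j hj => ?_
        refine (abs_le.1 (hB (shift^[j] z) ?_)).1
        rw [iter_val, zero_add]
        rcases Nat.eq_zero_or_pos j with rfl | hj0
        · rw [hz0]; exact hξ
        · exact hz2 j hj0 (Finset.mem_range.1 hj)
      simpa using this
    have h4 := hreg β hβ 1 le_rfl ξ z (fun i hi => by rw [Nat.lt_one_iff.1 hi, hz0])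
    have h5 : (c.K : ℝ) * (P β / β) ≤ c.K * (mf f + L) :=
      mul_le_mul_of_nonneg_left (hpu' β hβ) (Nat.cast_nonneg _)
    rw [hD, mul_add]
    linarith
  have hξ : ∃ ξ : ℕ → MarkovShift A, (∀ b ∈ c.F, (ξ b).1 0 ∈ c.F) ∧
      ∀ b, Admissible A b → (ξ b).1 0 = b := by
    classical
    refine ⟨fun b => if hb : Admissible A b then hb.choose else c.x0, ?_, ?_⟩
    · intro b hb
      by_cases h : Admissible A b
      · simp only [h, dif_pos]; rw [h.choose_spec]; exact hb
      · simp only [h, dif_neg, not_false_eq_true]; exact c.hx0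
    · intro b h
      simp only [h, dif_pos]; exact h.choose_spec
  obtain ⟨ξ, hξF, hξ0⟩ := hξ
  have hcard : (1 : ℝ) ≤ c.F.card := by
    exact_mod_cast Finset.card_pos.2 ⟨_, c.hx0⟩
  have hosc : ∀ β, 2 ≤ β → ∀ x y : MarkovShift A,
      W β y ≤ W β x + (c.v + c.M 1 + D + Real.log c.F.card) := by
    intro β hβ x y
    have h2 : E (β * W β y) ≤ ∑ b ∈ c.F, E (β * (c.v + c.M 1)) * E (β * W β (ξ b)) := by
      calc E (β * W β y) = Tw (fun y => β * f y - P β) (fun x => E (β * W β x)) y := by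
            rw [heig β hβ]
        _ ≤ ∑' a, ∑ b ∈ c.F, E (β * (c.v + c.M 1)) * (if A a ((ξ b).1 0) = true then
              E (β * f (pre a (ξ b)) - P β) * E (β * W β (pre a (ξ b))) else 0) := by
            refine ENNReal.tsum_le_tsum fun a => ?_
            by_cases ha : A a (y.1 0) = true
            · simp only [ha, if_true]
              obtain ⟨z, hz0, hz1, hz2⟩ := c.hF a ⟨pre a y, pre_zero ha⟩ c.x0
              have hzF : z.1 1 ∈ c.F := by
                rcases Nat.lt_or_ge 1 c.K with hK | hK
                · exact hz2 1 le_rfl hK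
                · have : c.K = 1 := le_antisymm hK c.hK
                  rw [this] at hz1
                  have h3 : (shift^[1] z).1 0 ∈ c.F := by rw [hz1]; exact c.hx0
                  exact h3
              have hzξ : A a ((ξ (z.1 1)).1 0) = true := by
                have h5 := hξ0 (z.1 1) ⟨shift z, rfl⟩
                rw [h5, ← hz0]; exact z.2 0
              refine le_trans ?_ (Finset.single_le_sum (f := fun b => E (β * (c.v + c.M 1)) *
                (if A a ((ξ b).1 0) = true then
                  E (β * f (pre a (ξ b)) - P β) * E (β * W β (pre a (ξ b))) else 0))
                (fun _ _ => zero_le) hzF)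
              simp only [hzξ, if_true]
              rw [← E_add, ← E_add, ← E_add]
              apply E_mono
              have h3 := (abs_le.1 (c.hv (pre a y) (pre a (ξ (z.1 1)))
                (by rw [pre_zero ha, pre_zero hzξ]))).2
              have h4 := hreg β hβ 1 le_rfl (pre a y) (pre a (ξ (z.1 1))) (fun i hi => by
                rw [Nat.lt_one_iff.1 hi, pre_zero ha, pre_zero hzξ])
              nlinarith
            · simp [ha]
        _ = ∑ b ∈ c.F, E (β * (c.v + c.M 1)) * E (β * W β (ξ b)) := by
            rw [Summable.tsum_finsetSum (fun _ _ => ENNReal.summable)]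
            refine Finset.sum_congr rfl fun b _ => ?_
            rw [ENNReal.tsum_mul_left]
            congr 1
            exact congrFun (heig β hβ) (ξ b)
    have h3 : ∑ b ∈ c.F, E (β * (c.v + c.M 1)) * E (β * W β (ξ b)) ≤
        ∑ _b ∈ c.F, E (β * (c.v + c.M 1) + β * (W β x + D)) := by
      refine Finset.sum_le_sum fun b hb => ?_
      rw [← E_add]
      apply E_mono
      have := hlow β hβ x (ξ b) (hξF b hb)
      nlinarith
    rw [Finset.sum_const, nsmul_eq_mul] at h3
    have h4 : (c.F.card : ℝ≥0∞) ≤ E (β * Real.log c.F.card) := by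
      have : (c.F.card : ℝ≥0∞) = E (Real.log c.F.card) := by
        rw [E_log (by linarith), ENNReal.ofReal_natCast]
      rw [this]
      apply E_mono
      have := Real.log_nonneg hcard
      nlinarith
    have h5 := (h2.trans h3).trans (mul_le_mul_left h4 _)
    rw [← E_add, E_le_iff] at h5
    have h6 : β * W β y ≤ β * (W β x + (c.v + c.M 1 + D + Real.log c.F.card)) := by linarith
    exact le_of_mul_le_mul_left h6 (by linarith)
  have hHm : ∀ β, 2 ≤ β → Measurable fun x => E (β * W β x) := fun β hβ => (hHc β hβ).measurable
  have hgib : ∀ β, 2 ≤ β → gibbs (h β) (ν β) = (ν β).withDensity fun x => E (β * W β x) := by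
    intro β hβ
    rw [gibbs]
    congr 1; funext x; exact hH β hβ x
  have hWc : ∀ β, 2 ≤ β → Continuous (W β) := fun β hβ =>
    cont_of_var (W β) c.M c.hMlim 1 (fun k hk y y' hy => hW β hβ k hk y y' hy)
  refine ⟨⟨fun β => P β / β, W, fun β => gibbs (h β) (ν β),
    c.v + c.M 1 + D + Real.log c.F.card, ?_, hp, hpm, hW, ?_, ?_, ?_, h1⟩, rfl⟩
  · have := hosc 2 le_rfl c.x0 c.x0
    linarith
  · intro β hβ x y
    rw [abs_le]
    constructor
    · linarith [hosc β hβ x y]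
    · linarith [hosc β hβ y x]
  · intro β hβ
    refine ⟨?_⟩
    rw [hgib β hβ, withDensity_apply _ MeasurableSet.univ, Measure.restrict_univ, hI β hβ]
  · intro β hβ u hu
    rw [hgib β hβ]
    have hmeas : Measurable fun y => -β * (-f y - W β y + W β (shift y) + P β / β) := by
      have h2 := (hWc β hβ).measurable
      have h3 := h2.comp (continuous_shift (A := A)).measurable
      exact (((c.hf.measurable.neg.sub h2).add h3).add_const _).const_mul _
    rw [lintegral_withDensity_eq_lintegral_mul _ (hHm β hβ) (Tw_measurable hmeas hu),
      lintegral_withDensity_eq_lintegral_mul _ (hHm β hβ) hu]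
    simp only [Pi.mul_apply]
    simp_rw [e1 β hβ u]
    exact hTν β hβ _ ((hHm β hβ).mul hu)

end fixed

end MarkovShift

namespace MarkovShift
variable {A : ℕ → ℕ → Bool}

theorem finite_symbols {s : ℕ → ℝ} (hs : Summable fun a => Real.exp (s a)) (B : ℝ) :
    {a | B ≤ s a}.Finite := by
  have h := hs.tendsto_cofinite_zero.eventually (gt_mem_nhds (Real.exp_pos B))
  rw [Filter.eventually_cofinite] at h
  refine h.subset fun a ha => ?_
  simp only [Set.mem_setOf_eq, not_lt]
  exact Real.exp_le_exp.2 ha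

theorem exists_support (μ : Measure (MarkovShift A)) [IsProbabilityMeasure μ] :
    ∃ c : MarkovShift A, ∀ l, μ (cylOf c l) ≠ 0 := by
  by_contra hc
  push Not at hc
  have : μ Set.univ = 0 := by
    refine measure_null_of_locally_null _ fun x _ => ?_
    obtain ⟨l, hl⟩ := hc x
    exact ⟨cylOf x l, by rw [nhdsWithin_univ]; exact (isOpen_cyl x l).mem_nhds (mem_cyl_self x l), hl⟩
  simp at this

section uniq
variable {f : MarkovShift A → ℝ}

theorem no_avoid (c : Ctx A f) {μmax : Measure (MarkovShift A)}
    (huniq : ∀ ν', IsMaximizing f ν' → ν' = μmax) {c0 : MarkovShift A}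
    (hc0 : ∀ l, μmax (cylOf c0 l) ≠ 0) {W : MarkovShift A → ℝ} (hW : IsCalibratedSubaction f W)
    (l : ℕ) (z : MarkovShift A)
    (hz : ∀ j, -f (shift^[j] z) - W (shift^[j] z) + W (shift (shift^[j] z)) + mf f = 0)
    (hz2 : ∀ j, shift^[j] z ∉ cylOf c0 l) : False := by
  obtain ⟨hWc, ⟨CW, hCW⟩, hWs, hWcal⟩ := hW
  obtain ⟨μ, hμ, hμO⟩ := kb z {a | mf f - 2 * CW ≤ c.s a} (finite_symbols c.hs _) (by
    intro i
    have h1 := c.hfs (shift^[i] z)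
    rw [iter_val, zero_add] at h1
    have h2 := hz i
    have h3 := abs_le.1 (hCW (shift^[i] z))
    have h4 := abs_le.1 (hCW (shift (shift^[i] z)))
    simp only [Set.mem_setOf_eq]
    linarith)
  have hprob := hμ.1
  have hRc : Continuous fun x => -f x - W x + W (shift x) + mf f :=
    ((c.hf.neg.sub hWc).add (hWc.comp continuous_shift)).add continuous_const
  have h1 : μ {x | -f x - W x + W (shift x) + mf f ≠ 0} = 0 :=
    hμO _ (isOpen_ne_fun hRc continuous_const) (fun j hj => hj (hz j))
  have h2 : μ (cylOf c0 l) = 0 := hμO _ (isOpen_cyl c0 l) hz2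
  have hae : f =ᵐ[μ] fun x => W (shift x) - W x + mf f := by
    have h3 : ∀ᵐ x ∂μ, -f x - W x + W (shift x) + mf f = 0 := h1
    filter_upwards [h3] with x hx
    linarith
  have hWi : Integrable W μ := Integrable.of_bound hWc.aestronglyMeasurable CW
    (Eventually.of_forall fun x => by simpa using hCW x)
  have hmp : MeasurePreserving shift μ μ := ⟨continuous_shift.measurable, hμ.2⟩
  have hWi' : Integrable (fun x => W (shift x)) μ := hmp.integrable_comp_of_integrable hWi
  have hhi : ∫ x, W (shift x) ∂μ = ∫ x, W x ∂μ := by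
    have h5 := integral_map (μ := μ) continuous_shift.measurable.aemeasurable
      (f := W) (by rw [hμ.2]; exact hWc.aestronglyMeasurable)
    rw [hμ.2] at h5
    exact h5.symm
  have hfi : Integrable f μ :=
    ((hWi'.sub hWi).add (integrable_const (mf f))).congr hae.symm
  have hmaxi : IsMaximizing f μ := by
    refine ⟨hμ, hfi, ?_⟩
    have e1 : ∫ x, (W (shift x) - W x + mf f) ∂μ = ∫ x, (W (shift x) - W x) ∂μ + ∫ _, mf f ∂μ :=
      integral_add (hWi'.sub hWi) (integrable_const _)
    rw [integral_congr_ae hae, e1, integral_sub hWi' hWi, hhi]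
    simp
  rw [huniq μ hmaxi] at h2
  exact hc0 l h2

theorem calib_ge (c : Ctx A f) {μmax : Measure (MarkovShift A)}
    (huniq : ∀ ν', IsMaximizing f ν' → ν' = μmax) {c0 : MarkovShift A}
    (hc0 : ∀ l, μmax (cylOf c0 l) ≠ 0) {V W : MarkovShift A → ℝ} (hV : IsCalibratedSubaction f V)
    (hW : IsCalibratedSubaction f W) (y : MarkovShift A) : W c0 - V c0 ≤ W y - V y := by
  have hV' := hV
  obtain ⟨hVc, ⟨CV, hCV⟩, hVs, hVcal⟩ := hV
  obtain ⟨hWc, -, hWs, -⟩ := hW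
  choose back hb1 hb2 using hVcal
  set o : ℕ → MarkovShift A := fun n => back^[n] y with ho
  have hos : ∀ n, shift (o (n + 1)) = o n := fun n => by
    rw [ho]; simp only [Function.iterate_succ_apply', hb1]
  have hoR : ∀ n, f (o (n + 1)) + V (o (n + 1)) - V (o n) - mf f = 0 := fun n => by
    have := hb2 (o n)
    rw [hb1] at this
    rw [ho]; simp only [Function.iterate_succ_apply']
    exact this
  have hoi : ∀ j n, j ≤ n → shift^[j] (o n) = o (n - j) := by
    intro j
    induction j with
    | zero => intro n _; rfl
    | succ j ih =>
      intro n hn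
      rw [Function.iterate_succ_apply', ih n (by omega),
        show n - j = (n - (j + 1)) + 1 by omega, hos]
  have hD : ∀ n, W (o n) - V (o n) ≤ W y - V y := by
    intro n
    induction n with
    | zero => exact le_rfl
    | succ n ih =>
      have h1 := hWs (o (n + 1))
      rw [hos] at h1
      have h2 := hoR n
      linarith
  have hvis : ∀ l, ∃ n, o n ∈ cylOf c0 l := by
    intro l
    by_contra hno
    push Not at hno
    have hle : (hyperfilter ℕ : Filter ℕ) ≤ atTop := by
      rw [← Nat.cofinite_eq_atTop]; exact hyperfilter_le_cofinite
    obtain ⟨z, hz⟩ := limit_point (hyperfilter ℕ) o (fun j =>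
      ⟨{a | mf f - 2 * CV ≤ c.s a}, finite_symbols c.hs _, by
        refine hle ?_
        filter_upwards [eventually_ge_atTop (j + 1)] with n hn
        have h1 := hoi j n (by omega)
        have h2 : (o n).1 j = (o (n - j)).1 0 := by rw [← h1, iter_val, zero_add]
        have h3 := hoR (n - j - 1)
        rw [show n - j - 1 + 1 = n - j by omega] at h3
        have h4 := c.hfs (o (n - j))
        have h5 := abs_le.1 (hCV (o (n - j)))
        have h6 := abs_le.1 (hCV (o (n - j - 1)))
        show mf f - 2 * CV ≤ c.s ((o n).1 j)
        rw [h2]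
        linarith⟩)
    refine no_avoid c huniq hc0 hV' l z (fun j => ?_) (fun j hj => ?_)
    · have hRc : Continuous fun x => -f x - V x + V (shift x) + mf f :=
        ((c.hf.neg.sub hVc).add (hVc.comp continuous_shift)).add continuous_const
      have h1 := ((hRc.comp (continuous_iter j)).tendsto z).comp hz
      have h2 : ((fun x => -f x - V x + V (shift x) + mf f) ∘ shift^[j]) ∘ o
          =ᶠ[hyperfilter ℕ] fun _ => 0 := by
        refine hle ?_
        filter_upwards [eventually_ge_atTop (j + 1)] with n hn
        simp only [Function.comp_apply]
        have h3 := hoR (n - j - 1)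
        have h4 := hos (n - j - 1)
        rw [show n - j - 1 + 1 = n - j by omega] at h3 h4
        rw [hoi j n (by omega), h4]
        linarith
      exact tendsto_nhds_unique h1 (tendsto_const_nhds.congr' h2.symm)
    · have h1 := ((continuous_iter j).tendsto z).comp hz
      have h2 := h1.eventually ((isOpen_cyl c0 l).mem_nhds hj)
      have h3 : ∀ᶠ n in (hyperfilter ℕ : Filter ℕ), j ≤ n := hle (eventually_ge_atTop j)
      obtain ⟨n, hn1, hn2⟩ := (h2.and h3).exists
      simp only [Function.comp_apply] at hn1
      rw [hoi j n hn2] at hn1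
      exact hno _ hn1
  choose n hn using hvis
  have ht : Tendsto (fun l => o (n l)) atTop (𝓝 c0) := tendsto_cyl c0 hn
  have ht2 := ((hWc.sub hVc).tendsto c0).comp ht
  exact le_of_tendsto ht2 (Eventually.of_forall fun l => hD (n l))

theorem calib_unique (c : Ctx A f) {μmax : Measure (MarkovShift A)}
    (huniq : ∀ ν', IsMaximizing f ν' → ν' = μmax) {c0 : MarkovShift A}
    (hc0 : ∀ l, μmax (cylOf c0 l) ≠ 0) {V W : MarkovShift A → ℝ} (hV : IsCalibratedSubaction f V)
    (hW : IsCalibratedSubaction f W) (x y : MarkovShift A) : W x - W y = V x - V y := by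
  have h1 := calib_ge c huniq hc0 hV hW x
  have h2 := calib_ge c huniq hc0 hV hW y
  have h3 := calib_ge c huniq hc0 hW hV x
  have h4 := calib_ge c huniq hc0 hW hV y
  linarith

end uniq

namespace Fam
variable {f : MarkovShift A → ℝ} {c : Ctx A f} {m : ℝ}

/-- the normalised cost -/
def R (Φ : Fam c m) (β : ℝ) (x : MarkovShift A) : ℝ :=
  -f x - Φ.W β x + Φ.W β (shift x) + Φ.p β

theorem contW (Φ : Fam c m) {β : ℝ} (hβ : 2 ≤ β) : Continuous (Φ.W β) :=
  cont_of_var (Φ.W β) c.M c.hMlim 1 (fun k hk y y' hy => Φ.hW β hβ k hk y y' hy)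

theorem contR (Φ : Fam c m) {β : ℝ} (hβ : 2 ≤ β) : Continuous (Φ.R β) :=
  ((c.hf.neg.sub (Φ.contW hβ)).add ((Φ.contW hβ).comp continuous_shift)).add continuous_const

theorem R_nonneg (Φ : Fam c m) {β : ℝ} (hβ : 2 ≤ β) (y : MarkovShift A) : 0 ≤ Φ.R β y := by
  have h2 := le_Nop (fun y => E (-β * Φ.R β y) * 1) y
  have h3 : Nop (fun y => E (-β * Φ.R β y) * 1) (shift y) = 1 := Φ.h1 β hβ (shift y)
  rw [h3] at h2
  simp only [mul_one] at h2
  rw [← E_zero, E_le_iff] at h2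
  by_contra hh
  push Not at hh
  nlinarith

theorem R_lower (Φ : Fam c m) {β : ℝ} (hβ : 2 ≤ β) (y : MarkovShift A) :
    -c.s (y.1 0) - Φ.C + m ≤ Φ.R β y := by
  have h1 := (abs_le.1 (Φ.hC β hβ y (shift y))).2
  have h2 := c.hfs y
  have h3 := Φ.hpm β hβ
  unfold R
  linarith

theorem birk (Φ : Fam c m) (β : ℝ) (k : ℕ) (y : MarkovShift A) :
    birkhoff (Φ.R β) k y = -birkhoff f k y - Φ.W β y + Φ.W β (shift^[k] y) + k * Φ.p β := by
  induction k with
  | zero => simp [birkhoff_zero]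
  | succ k ih =>
    rw [birkhoff_succ, birkhoff_succ, ih, R, Function.iterate_succ_apply']
    push_cast; ring

theorem birk_var (Φ : Fam c m) {β : ℝ} (hβ : 2 ≤ β) {k l : ℕ} (hl : 1 ≤ l) {y y' : MarkovShift A}
    (h : y' ∈ cylOf y (k + l)) :
    |birkhoff (Φ.R β) k y - birkhoff (Φ.R β) k y'| ≤ 3 * c.M l := by
  rw [birk, birk]
  have h1 := abs_le.1 (c.hM l hl k y y' h)
  have h2 := abs_le.1 (Φ.hW β hβ l hl y y' (cyl_anti y (by omega) h))
  have h3 := abs_le.1 (Φ.hW β hβ l hl _ _ (cyl_iter h))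
  rw [abs_le]
  constructor <;> linarith

theorem R_var (Φ : Fam c m) {β : ℝ} (hβ : 2 ≤ β) {l : ℕ} (hl : 1 ≤ l) {y y' : MarkovShift A}
    (h : y' ∈ cylOf y (1 + l)) : |Φ.R β y - Φ.R β y'| ≤ 3 * c.M l := by
  have := Φ.birk_var hβ hl h
  simpa [birkhoff_one] using this

/-- the constant bounding the operator at β = 1 -/
noncomputable def Q (Φ : Fam c m) : ℝ≥0∞ := E (Φ.C - m) * ∑' a, E (c.s a)

theorem Q_ne_top (Φ : Fam c m) : Φ.Q ≠ ∞ := ENNReal.mul_ne_top (E_ne_top _) (tsum_E_ne_top c.hs)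

theorem Tw_le (Φ : Fam c m) {β : ℝ} (hβ : 2 ≤ β) (x : MarkovShift A) :
    Tw (fun y => -Φ.R β y) (fun _ => 1) x ≤ Φ.Q := by
  unfold Tw
  simp only [mul_one]
  refine Nop_sum_le _ _ (fun y => ?_) x
  linarith [Φ.R_lower hβ y]

theorem ultra (Φ : Fam c (mf f)) (l : Ultrafilter ℝ) (hl : (l : Filter ℝ) ≤ atTop) :
    ∃ W, IsCalibratedSubaction f W ∧
      ∀ x, Tendsto (fun β => Φ.W β x - Φ.W β c.x0) l (𝓝 (W x)) := by
  have h2 : ∀ᶠ β in (l : Filter ℝ), 2 ≤ β := hl (eventually_ge_atTop 2)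
  have hex : ∀ x, ∃ w, Tendsto (fun β => Φ.W β x - Φ.W β c.x0) l (𝓝 w) := by
    intro x
    have hc : IsCompact (Set.Icc (-Φ.C) Φ.C) := isCompact_Icc
    have := hc.ultrafilter_le_nhds' (l.map fun β => Φ.W β x - Φ.W β c.x0) (by
      rw [Ultrafilter.mem_map]
      have h3 : ∀ᶠ β in (l : Filter ℝ), Φ.W β x - Φ.W β c.x0 ∈ Set.Icc (-Φ.C) Φ.C := by
        filter_upwards [h2] with β hβ
        exact abs_le.1 (Φ.hC β hβ x c.x0)
      exact h3)
    obtain ⟨w, -, hw⟩ := this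
    exact ⟨w, hw⟩
  choose W hW using hex
  have hWW : ∀ x y, Tendsto (fun β => Φ.W β x - Φ.W β y) l (𝓝 (W x - W y)) := by
    intro x y
    refine ((hW x).sub (hW y)).congr fun β => ?_
    ring
  have hR : ∀ x, Tendsto (fun β => Φ.R β x) l (𝓝 (-f x - W x + W (shift x) + mf f)) := by
    intro x
    have h1 : Tendsto (fun β => -f x - (Φ.W β x - Φ.W β (shift x)) + Φ.p β) l
        (𝓝 (-f x - (W x - W (shift x)) + mf f)) :=
      (tendsto_const_nhds.sub (hWW x (shift x))).add (Φ.hp.mono_left hl)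
    have e : -f x - (W x - W (shift x)) + mf f = -f x - W x + W (shift x) + mf f := by ring
    rw [e] at h1
    refine h1.congr fun β => ?_
    unfold R; ring
  have hR0 : ∀ x, 0 ≤ -f x - W x + W (shift x) + mf f := fun x =>
    ge_of_tendsto (hR x) (by filter_upwards [h2] with β hβ using Φ.R_nonneg hβ x)
  refine ⟨W, ⟨?_, ⟨Φ.C, ?_⟩, ?_, ?_⟩, hW⟩
  · refine cont_of_var W c.M c.hMlim 1 (fun k hk y y' hy => ?_)
    exact le_of_tendsto (hWW y y').abs (by filter_upwards [h2] with β hβ using Φ.hW β hβ k hk y y' hy)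
  · intro x
    exact le_of_tendsto (hW x).abs (by filter_upwards [h2] with β hβ using Φ.hC β hβ _ _)
  · intro x; linarith [hR0 x]
  · intro y
    by_contra hno
    push Not at hno
    have hpos : ∀ x, shift x = y → 0 < -f x - W x + W (shift x) + mf f := by
      intro x hx
      refine lt_of_le_of_ne (hR0 x) fun h => hno x hx ?_
      linarith
    have hsum : ∀ β, 2 ≤ β → ∑' a, (if A a (y.1 0) = true then
        Real.exp (-β * Φ.R β (pre a y)) else 0) = 1 := by
      intro β hβ
      have h3 : ∑' a, (if A a (y.1 0) = true then E (-β * Φ.R β (pre a y)) * 1 else 0) = 1 :=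
        Φ.h1 β hβ y
      have h4 := congrArg ENNReal.toReal h3
      rw [ENNReal.tsum_toReal_eq (fun a => by
        by_cases ha : A a (y.1 0) = true
        · simp [ha, E_ne_top]
        · simp [ha])] at h4
      rw [ENNReal.toReal_one] at h4
      rw [← h4]
      refine tsum_congr fun a => ?_
      by_cases ha : A a (y.1 0) = true
      · simp [ha, E, (Real.exp_pos _).le]
      · simp [ha]
    have hlim : Tendsto (fun β => ∑' a, (if A a (y.1 0) = true then
        Real.exp (-β * Φ.R β (pre a y)) else 0)) l (𝓝 (∑' _ : ℕ, (0 : ℝ))) := by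
      refine tendsto_tsum_of_dominated_convergence
        (bound := fun a => Real.exp (Φ.C - mf f) * Real.exp (c.s a)) (c.hs.mul_left _) ?_ ?_
      · intro a
        by_cases ha : A a (y.1 0) = true
        · simp only [ha, if_true]
          refine Real.tendsto_exp_atBot.comp ?_
          have h3 : Tendsto (fun β => β * Φ.R β (pre a y)) l atTop :=
            Tendsto.atTop_mul_pos (hpos _ (shift_pre ha)) (tendsto_id.mono_left hl) (hR _)
          refine (tendsto_neg_atTop_atBot.comp h3).congr fun β => ?_
          simp
        · simp only [ha]; exact tendsto_const_nhds
      · filter_upwards [h2] with β hβ a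
        by_cases ha : A a (y.1 0) = true
        · simp only [ha, if_true]
          rw [Real.norm_eq_abs, abs_of_pos (Real.exp_pos _), ← Real.exp_add]
          apply Real.exp_le_exp.2
          have h3 := Φ.R_lower hβ (pre a y)
          rw [pre_zero ha] at h3
          have h4 := Φ.R_nonneg hβ (pre a y)
          nlinarith
        · simp only [ha]
          simp only [Bool.false_eq_true, if_false, norm_zero]
          positivity
    rw [tsum_zero] at hlim
    have h5 : Tendsto (fun _ : ℝ => (1 : ℝ)) l (𝓝 0) := hlim.congr' (by
      filter_upwards [h2] with β hβ using hsum β hβ)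
    exact one_ne_zero (tendsto_nhds_unique tendsto_const_nhds h5)

theorem R_tendsto (Φ : Fam c (mf f)) {μmax : Measure (MarkovShift A)}
    (huniq : ∀ ν', IsMaximizing f ν' → ν' = μmax) {c0 : MarkovShift A}
    (hc0 : ∀ l, μmax (cylOf c0 l) ≠ 0) {V : MarkovShift A → ℝ} (hV : IsCalibratedSubaction f V)
    (x : MarkovShift A) :
    Tendsto (fun β => Φ.R β x) atTop (𝓝 (-f x - V x + V (shift x) + mf f)) := by
  rw [tendsto_iff_ultrafilter]
  intro l hl
  obtain ⟨W, hWc, hW⟩ := Φ.ultra l hl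
  have hx := calib_unique c huniq hc0 hV hWc x (shift x)
  have h1 : Tendsto (fun β => -f x - ((Φ.W β x - Φ.W β c.x0) - (Φ.W β (shift x) - Φ.W β c.x0))
      + Φ.p β) l (𝓝 (-f x - (W x - W (shift x)) + mf f)) :=
    (tendsto_const_nhds.sub ((hW x).sub (hW (shift x)))).add (Φ.hp.mono_left hl)
  rw [hx] at h1
  have e : -f x - (V x - V (shift x)) + mf f = -f x - V x + V (shift x) + mf f := by ring
  rw [e] at h1
  refine h1.congr fun β => ?_
  unfold R; ring

end Fam
end MarkovShift

namespace MarkovShift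
variable {A : ℕ → ℕ → Bool}

theorem birkhoff_add (g : MarkovShift A → ℝ) (a b : ℕ) (y : MarkovShift A) :
    birkhoff g (a + b) y = birkhoff g a y + birkhoff g b (shift^[a] y) := by
  unfold birkhoff
  rw [Finset.sum_range_add]
  congr 1
  refine Finset.sum_congr rfl fun j _ => ?_
  rw [← Function.iterate_add_apply, add_comm]

theorem birkhoff_const_mul (g : MarkovShift A → ℝ) (b : ℝ) (k : ℕ) (y : MarkovShift A) :
    birkhoff (fun y => b * g y) k y = b * birkhoff g k y := by
  simp [birkhoff, Finset.mul_sum]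

theorem birkhoff_nonneg {g : MarkovShift A → ℝ} (hg : ∀ y, 0 ≤ g y) (k : ℕ) (y : MarkovShift A) :
    0 ≤ birkhoff g k y := Finset.sum_nonneg fun _ _ => hg _

theorem single_le_birkhoff {g : MarkovShift A → ℝ} (hg : ∀ y, 0 ≤ g y) {j k : ℕ} (hj : j < k)
    (y : MarkovShift A) : g (shift^[j] y) ≤ birkhoff g k y :=
  Finset.single_le_sum (f := fun j => g (shift^[j] y)) (fun _ _ => hg _) (Finset.mem_range.2 hj)

theorem birkhoff_mono {g : MarkovShift A → ℝ} (hg : ∀ y, 0 ≤ g y) {j k : ℕ} (hj : j ≤ k)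
    (y : MarkovShift A) : birkhoff g j y ≤ birkhoff g k y := by
  obtain ⟨d, rfl⟩ := Nat.exists_eq_add_of_le hj
  rw [birkhoff_add]
  linarith [birkhoff_nonneg hg d (shift^[j] y)]

theorem exists_E_ge {q : ℝ≥0∞} (hq : q ≠ ∞) : ∃ L, q ≤ E L := by
  refine ⟨q.toReal, ?_⟩
  rw [E]
  calc q = ENNReal.ofReal q.toReal := (ENNReal.ofReal_toReal hq).symm
    _ ≤ _ := ENNReal.ofReal_le_ofReal (by linarith [Real.add_one_le_exp q.toReal])

theorem finite_preim (c0 : MarkovShift A) (G : Set ℕ) (hG : G.Finite) (j : ℕ) :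
    {u : MarkovShift A | shift^[j] u = c0 ∧ ∀ i < j, u.1 i ∈ G}.Finite := by
  induction j with
  | zero =>
    refine (Set.finite_singleton c0).subset fun u hu => hu.1
  | succ j ih =>
    refine (Set.Finite.image2 pre hG ih).subset fun u hu => ?_
    refine ⟨u.1 0, hu.2 0 (by omega), shift u, ⟨?_, fun i hi => hu.2 (i + 1) (by omega)⟩, pre_shift u⟩
    rw [← Function.iterate_succ_apply]; exact hu.1

namespace Fam
variable {f : MarkovShift A → ℝ} {c : Ctx A f} {m : ℝ}

theorem hT' (Φ : Fam c m) {β : ℝ} (hβ : 2 ≤ β) (u : MarkovShift A → ℝ≥0∞) (hu : Measurable u) :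
    ∫⁻ x, Tw (fun y => -β * Φ.R β y) u x ∂(Φ.μ β) = ∫⁻ x, u x ∂(Φ.μ β) := Φ.hT β hβ u hu

theorem measR (Φ : Fam c m) {β : ℝ} (hβ : 2 ≤ β) : Measurable fun y => -β * Φ.R β y :=
  (Φ.contR hβ).measurable.const_mul _

theorem inv (Φ : Fam c m) {β : ℝ} (hβ : 2 ≤ β) (j : ℕ) {S : Set (MarkovShift A)}
    (hS : MeasurableSet S) : Φ.μ β (shift^[j] ⁻¹' S) = Φ.μ β S :=
  pres_of_Tw (Φ.measR hβ) (Φ.hT' hβ) (Φ.h1 β hβ) j hS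

theorem visit (Φ : Fam c m) {Rp : MarkovShift A → ℝ}
    (hRt : ∀ x, Tendsto (fun β => Φ.R β x) atTop (𝓝 (Rp x))) {c0 : MarkovShift A}
    (hempty : ∀ l z, (∀ j, Rp (shift^[j] z) = 0) → (∀ j, shift^[j] z ∉ cylOf c0 l) → False)
    (l : ℕ) : ∃ (N : ℕ) (δ β₀ : ℝ), 0 < δ ∧ 2 ≤ β₀ ∧ ∀ β, β₀ ≤ β → ∀ z : MarkovShift A,
      (∀ j < N, Φ.R β (shift^[j] z) ≤ δ) → ∃ j < N, shift^[j] z ∈ cylOf c0 l := by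
  by_contra hno
  push Not at hno
  have h1 : ∀ n : ℕ, ∃ β, (n : ℝ) + 2 ≤ β ∧ ∃ z : MarkovShift A,
      (∀ j < n, Φ.R β (shift^[j] z) ≤ 1 / ((n : ℝ) + 1)) ∧ ∀ j < n, shift^[j] z ∉ cylOf c0 l :=
    fun n => hno n (1 / ((n : ℝ) + 1)) (n + 2) (by positivity) (by
      have : (0 : ℝ) ≤ n := Nat.cast_nonneg n
      linarith)
  choose β hβ z hz1 hz2 using h1
  have hβ2 : ∀ n, 2 ≤ β n := fun n => by
    have : (0 : ℝ) ≤ n := Nat.cast_nonneg n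
    linarith [hβ n]
  have hle : (hyperfilter ℕ : Filter ℕ) ≤ atTop := by
    rw [← Nat.cofinite_eq_atTop]; exact hyperfilter_le_cofinite
  have hβt : Tendsto β (hyperfilter ℕ) atTop := by
    refine Tendsto.mono_left ?_ hle
    refine tendsto_atTop_mono (fun n => ?_) (tendsto_natCast_atTop_atTop (R := ℝ))
    linarith [hβ n]
  have hgt : ∀ j : ℕ, ∀ᶠ n in (hyperfilter ℕ : Filter ℕ), j < n := fun j =>
    hle (eventually_gt_atTop j)
  obtain ⟨w, hw⟩ := limit_point (hyperfilter ℕ) z (fun j =>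
    ⟨{a | m - Φ.C - 1 ≤ c.s a}, finite_symbols c.hs _, by
      filter_upwards [hgt j] with n hn
      have h3 := Φ.R_lower (hβ2 n) (shift^[j] (z n))
      rw [iter_val, zero_add] at h3
      have h4 := hz1 n j hn
      have h5 : 1 / ((n : ℝ) + 1) ≤ 1 := by
        rw [div_le_one (by positivity)]
        have : (0 : ℝ) ≤ n := Nat.cast_nonneg n
        linarith
      show m - Φ.C - 1 ≤ c.s ((z n).1 j)
      linarith⟩)
  have hRp0 : ∀ x, 0 ≤ Rp x := fun x => ge_of_tendsto (hRt x) (by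
    filter_upwards [eventually_ge_atTop 2] with β hβ using Φ.R_nonneg hβ x)
  refine hempty l w (fun j => ?_) (fun j hj => ?_)
  · refine le_antisymm ?_ (hRp0 _)
    have hM : ∀ k, 1 ≤ k → Rp (shift^[j] w) ≤ 3 * c.M k := by
      intro k hk
      have h3 : Tendsto (fun n : ℕ => 1 / ((n : ℝ) + 1) + 3 * c.M k) (hyperfilter ℕ)
          (𝓝 (0 + 3 * c.M k)) :=
        (tendsto_one_div_add_atTop_nhds_zero_nat.mono_left hle).add tendsto_const_nhds
      rw [zero_add] at h3
      refine le_of_tendsto_of_tendsto ((hRt (shift^[j] w)).comp hβt) h3 ?_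
      have h4 := (((continuous_iter j).tendsto w).comp hw).eventually
        ((isOpen_cyl (shift^[j] w) (1 + k)).mem_nhds (mem_cyl_self _ _))
      filter_upwards [h4, hgt j] with n hn hjn
      have h5 := (abs_le.1 (Φ.R_var (hβ2 n) hk hn)).2
      have h6 := hz1 n j hjn
      simp only [Function.comp_apply] at h5 ⊢
      linarith
    have h7 : Tendsto (fun k => 3 * c.M k) atTop (𝓝 (3 * 0)) := c.hMlim.const_mul 3
    rw [mul_zero] at h7
    refine ge_of_tendsto h7 ?_
    filter_upwards [eventually_ge_atTop 1] with k hk using hM k hk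
  · have h4 := (((continuous_iter j).tendsto w).comp hw).eventually
      ((isOpen_cyl c0 l).mem_nhds hj)
    obtain ⟨n, hn1, hn2⟩ := (h4.and (hgt j)).exists
    exact hz2 n j hn2 hn1

theorem c0_lower (Φ : Fam c m) {Rp : MarkovShift A → ℝ}
    (hRt : ∀ x, Tendsto (fun β => Φ.R β x) atTop (𝓝 (Rp x))) {c0 : MarkovShift A}
    (hempty : ∀ l z, (∀ j, Rp (shift^[j] z) = 0) → (∀ j, shift^[j] z ∉ cylOf c0 l) → False)
    (l : ℕ) {ε : ℝ} (hε : 0 < ε) : ∀ᶠ β in atTop, E (-β * ε) ≤ Φ.μ β (cylOf c0 l) := by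
  obtain ⟨N, δ, β₀, hδ, hβ₀, hvis⟩ := Φ.visit hRt hempty l
  obtain ⟨L, hL⟩ := exists_E_ge Φ.Q_ne_top
  have hNtop : (N : ℝ≥0∞) ≠ ∞ := ENNReal.natCast_ne_top N
  obtain ⟨LN, hLN⟩ := exists_E_ge (q := 2 * (N : ℝ≥0∞)) (ENNReal.mul_ne_top (by simp) hNtop)
  have ht1 : ∀ᶠ β : ℝ in atTop, LN ≤ β * ε :=
    (tendsto_id.atTop_mul_const hε).eventually_ge_atTop LN
  have ht2 : ∀ᶠ β : ℝ in atTop, LN + L + δ ≤ β * δ :=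
    (tendsto_id.atTop_mul_const hδ).eventually_ge_atTop _
  filter_upwards [eventually_ge_atTop β₀, ht1, ht2] with β hβ hb1 hb2
  have hβ2 : 2 ≤ β := hβ₀.trans hβ
  have hprob := Φ.hprob β hβ2
  set S : Set (MarkovShift A) := {y | δ < Φ.R β y} with hS
  have hSm : MeasurableSet S := measurableSet_lt measurable_const (Φ.contR hβ2).measurable
  have hcov : (Set.univ : Set (MarkovShift A)) ⊆
      ⋃ j ∈ Finset.range N, (shift^[j] ⁻¹' (cylOf c0 l) ∪ shift^[j] ⁻¹' S) := by
    intro z _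
    simp only [Finset.mem_range, Set.mem_iUnion, Set.mem_union, Set.mem_preimage, exists_prop]
    by_cases hz : ∀ j < N, Φ.R β (shift^[j] z) ≤ δ
    · obtain ⟨j, hj, hj2⟩ := hvis β hβ z hz
      exact ⟨j, hj, Or.inl hj2⟩
    · push Not at hz
      obtain ⟨j, hj, hj2⟩ := hz
      exact ⟨j, hj, Or.inr hj2⟩
  have h1 : (1 : ℝ≥0∞) ≤ N * (Φ.μ β (cylOf c0 l) + Φ.μ β S) := by
    calc (1 : ℝ≥0∞) = Φ.μ β Set.univ := by simp
      _ ≤ ∑ j ∈ Finset.range N, Φ.μ β (shift^[j] ⁻¹' (cylOf c0 l) ∪ shift^[j] ⁻¹' S) :=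
          (measure_mono hcov).trans (measure_biUnion_finset_le _ _)
      _ ≤ ∑ j ∈ Finset.range N, (Φ.μ β (cylOf c0 l) + Φ.μ β S) := by
          refine Finset.sum_le_sum fun j _ => (measure_union_le _ _).trans ?_
          rw [Φ.inv hβ2 j (measurableSet_cyl c0 l), Φ.inv hβ2 j hSm]
      _ = _ := by rw [Finset.sum_const, Finset.card_range, nsmul_eq_mul]
  have h2 : Φ.μ β S ≤ E (-LN) := by
    refine (set_upper (Φ.R β) (Φ.contR hβ2).measurable β (by linarith) (Φ.hT' hβ2) Φ.Q
      (Φ.Tw_le hβ2) 1 δ S hSm (fun y hy => by rw [birkhoff_one]; exact le_of_lt hy)).trans ?_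
    rw [pow_one]
    refine (mul_le_mul_right hL _).trans ?_
    rw [← E_add]
    apply E_mono
    linarith
  have h3 : (2 * N : ℝ≥0∞) * Φ.μ β S ≤ 1 := by
    calc _ ≤ E LN * E (-LN) := mul_le_mul' hLN h2
      _ = 1 := E_mul_neg _
  have h4 : (1 : ℝ≥0∞) ≤ 2 * N * Φ.μ β (cylOf c0 l) := by
    have h5 : (2 : ℝ≥0∞) ≤ 2 * N * Φ.μ β (cylOf c0 l) + 1 := by
      calc (2 : ℝ≥0∞) = 2 * 1 := by simp
        _ ≤ 2 * (N * (Φ.μ β (cylOf c0 l) + Φ.μ β S)) := mul_le_mul_right h1 _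
        _ = 2 * N * Φ.μ β (cylOf c0 l) + 2 * N * Φ.μ β S := by ring
        _ ≤ _ := by gcongr
    have h5' : (1 : ℝ≥0∞) + 1 ≤ 2 * N * Φ.μ β (cylOf c0 l) + 1 := by
      rw [one_add_one_eq_two]; exact h5
    exact (ENNReal.add_le_add_iff_right ENNReal.one_ne_top).1 h5'
  have h5 : (1 : ℝ≥0∞) ≤ E LN * Φ.μ β (cylOf c0 l) := h4.trans (mul_le_mul_left hLN _)
  calc E (-β * ε) ≤ E (-LN) := E_mono (by linarith)
    _ = E (-LN) * 1 := (mul_one _).symm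
    _ ≤ E (-LN) * (E LN * Φ.μ β (cylOf c0 l)) := mul_le_mul_right h5 _
    _ = Φ.μ β (cylOf c0 l) := by
        rw [← mul_assoc, mul_comm (E (-LN)), E_mul_neg, one_mul]

end Fam
end MarkovShift

namespace MarkovShift
variable {A : ℕ → ℕ → Bool}

/-- costs of reaching `c0` from the cylinder -/
def costs (Rp : MarkovShift A → ℝ) (c0 x : MarkovShift A) (n : ℕ) : Set ℝ :=
  {t | ∃ j y, n ≤ j ∧ y ∈ cylOf x n ∧ shift^[j] y = c0 ∧ t = birkhoff Rp j y}

theorem costs_nonempty {f : MarkovShift A → ℝ} (c : Ctx A f) (Rp : MarkovShift A → ℝ)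
    (c0 x : MarkovShift A) (n : ℕ) : (costs Rp c0 x (n + 1)).Nonempty := by
  obtain ⟨z, hz0, hzK, -⟩ := c.hF (x.1 n) ⟨shift^[n] x, by rw [iter_val, zero_add]⟩ c0
  have hK := c.hK
  have h : x.1 n = z.1 0 := hz0.symm
  refine ⟨_, n + c.K, splice x n z h, by omega, ?_, ?_, rfl⟩
  · refine splice_agree h (l := 1) ?_
    intro i hi
    obtain rfl : i = 0 := by omega
    rw [iter_val, zero_add, h]
  · rw [add_comm, Function.iterate_add_apply, iter_splice, hzK]

namespace Fam
variable {f : MarkovShift A → ℝ} {c : Ctx A f} {m : ℝ}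

theorem birk_tendsto (Φ : Fam c m) {Rp : MarkovShift A → ℝ}
    (hRt : ∀ x, Tendsto (fun β => Φ.R β x) atTop (𝓝 (Rp x))) (j : ℕ) (y : MarkovShift A) :
    Tendsto (fun β => birkhoff (Φ.R β) j y) atTop (𝓝 (birkhoff Rp j y)) :=
  tendsto_finset_sum _ fun i _ => hRt (shift^[i] y)

theorem cyl_ge (Φ : Fam c m) {Rp : MarkovShift A → ℝ}
    (hRt : ∀ x, Tendsto (fun β => Φ.R β x) atTop (𝓝 (Rp x))) {c0 : MarkovShift A}
    (hempty : ∀ l z, (∀ j, Rp (shift^[j] z) = 0) → (∀ j, shift^[j] z ∉ cylOf c0 l) → False)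
    (x : MarkovShift A) (n : ℕ) {ε : ℝ} (hε : 0 < ε) :
    ∀ᶠ β in atTop, E (-β * (sInf (costs Rp c0 x (n + 1)) + ε)) ≤ Φ.μ β (cylOf x (n + 1)) := by
  obtain ⟨t, ⟨j, y, hj, hy, hyc, rfl⟩, ht⟩ := exists_lt_of_csInf_lt
    (costs_nonempty c Rp c0 x n) (lt_add_of_pos_right (sInf (costs Rp c0 x (n + 1)))
      (show 0 < ε / 4 by linarith))
  have hl : ∀ᶠ l in atTop, c.M l < ε / 12 := c.hMlim.eventually (gt_mem_nhds (by linarith))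
  obtain ⟨l, hl⟩ := (((tendsto_add_atTop_nat 1).eventually hl)).exists
  filter_upwards [eventually_ge_atTop 2, Φ.c0_lower hRt hempty (l + 1) (show 0 < ε / 4 by linarith),
    (Φ.birk_tendsto hRt j y).eventually (gt_mem_nhds (show birkhoff Rp j y < birkhoff Rp j y + ε / 4
      by linarith))] with β hβ h1 h2
  have h3 := cyl_lower (Φ.measR hβ) (Φ.hT' hβ) y j l (-β * (birkhoff (Φ.R β) j y + 3 * c.M (l + 1)))
    (fun z hz => by
      rw [birkhoff_const_mul]
      have := (abs_le.1 (Φ.birk_var hβ (by omega) hz)).1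
      nlinarith)
  rw [hyc] at h3
  calc _ ≤ E (-β * (birkhoff (Φ.R β) j y + 3 * c.M (l + 1)) + -β * (ε / 4)) := by
        apply E_mono
        nlinarith
    _ ≤ _ := by
        rw [E_add]
        exact mul_le_mul_right h1 _
    _ ≤ _ := h3
    _ ≤ Φ.μ β (cylOf y (n + 1)) := measure_mono (cyl_anti y (by omega))
    _ = _ := by rw [cyl_eq_of_mem hy]

theorem window (Φ : Fam c m) {β δ : ℝ} (hβ : 2 ≤ β) (hδ : 0 < δ) (n N q : ℕ) (y : MarkovShift A)
    (h : birkhoff (Φ.R β) (n + N * q) y < q * δ) :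
    ∃ w < q, ∀ j < N, Φ.R β (shift^[j] (shift^[n + N * w] y)) ≤ δ := by
  induction q with
  | zero => 
    have := birkhoff_nonneg (Φ.R_nonneg hβ) (n + N * 0) y
    simp at h
    simp at this
    linarith
  | succ q ih =>
    by_cases hq : ∀ j < N, Φ.R β (shift^[j] (shift^[n + N * q] y)) ≤ δ
    · exact ⟨q, by omega, hq⟩
    · push Not at hq
      obtain ⟨j, hj, hj2⟩ := hq
      have e : n + N * (q + 1) = n + N * q + N := by ring
      rw [e, birkhoff_add] at h
      have := single_le_birkhoff (Φ.R_nonneg hβ) hj (shift^[n + N * q] y)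
      push_cast at h
      obtain ⟨w, hw, hw2⟩ := ih (by linarith)
      exact ⟨w, by omega, hw2⟩

theorem cyl_le (Φ : Fam c m) {Rp : MarkovShift A → ℝ}
    (hRt : ∀ x, Tendsto (fun β => Φ.R β x) atTop (𝓝 (Rp x))) {c0 : MarkovShift A}
    (hempty : ∀ l z, (∀ j, Rp (shift^[j] z) = 0) → (∀ j, shift^[j] z ∉ cylOf c0 l) → False)
    (x : MarkovShift A) (n : ℕ) {ε : ℝ} (hε : 0 < ε) :
    ∀ᶠ β in atTop, Φ.μ β (cylOf x (n + 1)) ≤ E (-β * (sInf (costs Rp c0 x (n + 1)) - ε)) := by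
  have hRp0 : ∀ x, 0 ≤ Rp x := fun x => ge_of_tendsto (hRt x) (by
    filter_upwards [eventually_ge_atTop 2] with β hβ using Φ.R_nonneg hβ x)
  have hbdd : BddBelow (costs Rp c0 x (n + 1)) :=
    ⟨0, by rintro t ⟨j, y, -, -, -, rfl⟩; exact birkhoff_nonneg hRp0 _ _⟩
  set φ := sInf (costs Rp c0 x (n + 1)) with hφ
  have hl : ∀ᶠ l in atTop, c.M l < ε / 12 := c.hMlim.eventually (gt_mem_nhds (by linarith))
  obtain ⟨l, hl⟩ := (((tendsto_add_atTop_nat 1).eventually hl)).exists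
  obtain ⟨N, δ, β₀, hδ, hβ₀, hvis⟩ := Φ.visit hRt hempty (l + 1)
  obtain ⟨q, hq⟩ : ∃ q : ℕ, φ < q * δ := by
    obtain ⟨q, hq⟩ := exists_nat_gt (φ / δ)
    exact ⟨q, (div_lt_iff₀ hδ).1 hq⟩
  set k := n + 1 + N * q with hk
  have hG := finite_symbols c.hs (m - Φ.C - φ)
  set G : Set ℕ := {a | m - Φ.C - φ ≤ c.s a} with hGdef
  have hev : ∀ᶠ β in atTop, ∀ j ∈ Finset.range k,
      ∀ u ∈ {u : MarkovShift A | shift^[j] u = c0 ∧ ∀ i < j, u.1 i ∈ G},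
      birkhoff Rp j u - ε / 4 < birkhoff (Φ.R β) j u := by
    rw [Filter.eventually_all_finset]
    intro j _
    rw [Filter.eventually_all_finite (finite_preim c0 G hG j)]
    intro u _
    exact (Φ.birk_tendsto hRt j u).eventually (lt_mem_nhds (by linarith))
  obtain ⟨L, hL⟩ := exists_E_ge (ENNReal.pow_ne_top Φ.Q_ne_top (n := k))
  have ht1 : ∀ᶠ β : ℝ in atTop, L + (φ - ε / 2) ≤ β * (ε / 2) :=
    (tendsto_id.atTop_mul_const (by linarith)).eventually_ge_atTop _
  filter_upwards [eventually_ge_atTop β₀, hev, ht1] with β hβ hev hb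
  have hβ2 : 2 ≤ β := hβ₀.trans hβ
  have hprob := Φ.hprob β hβ2
  have hR0 := Φ.R_nonneg hβ2
  have key : ∀ y ∈ cylOf x (n + 1), φ - ε / 2 ≤ birkhoff (Φ.R β) k y := by
    intro y hy
    by_contra! hlt
    obtain ⟨w, hw, hw2⟩ := Φ.window hβ2 hδ (n + 1) N q y (by linarith)
    obtain ⟨i, hi, hi2⟩ := hvis β hβ _ hw2
    rw [← Function.iterate_add_apply] at hi2
    set j := i + (n + 1 + N * w) with hj
    have hjk : j < k := by
      have : N * (w + 1) ≤ N * q := Nat.mul_le_mul_left N hw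
      rw [Nat.mul_add, Nat.mul_one] at this
      omega
    have h0 : y.1 j = c0.1 0 := by
      have := hi2 0 (by omega)
      rwa [iter_val, zero_add] at this
    have hsa := splice_agree h0 hi2
    have hisp := iter_splice h0
    set y' := splice y j c0 h0 with hy'
    have hv := abs_le.1 (Φ.birk_var hβ2 (by omega) hsa)
    have hmem : y' ∈ {u : MarkovShift A | shift^[j] u = c0 ∧ ∀ i < j, u.1 i ∈ G} := by
      refine ⟨hisp, fun i hi => ?_⟩
      have e1 : y'.1 i = y.1 i := hsa i (by omega)
      have e2 := Φ.R_lower hβ2 (shift^[i] y)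
      have e3 := single_le_birkhoff hR0 (hi.trans hjk) y
      rw [iter_val, zero_add, ← e1] at e2
      show m - Φ.C - φ ≤ c.s (y'.1 i)
      linarith
    have h5 := hev j (Finset.mem_range.2 hjk) y' hmem
    have h6 : φ ≤ birkhoff Rp j y' := csInf_le hbdd ⟨j, y', by omega, by
      rw [← cyl_eq_of_mem hy]
      exact cyl_anti y (by omega) hsa, hisp, rfl⟩
    have h7 := birkhoff_mono hR0 hjk.le y
    linarith [hv.1, hv.2]
  refine (set_upper (Φ.R β) (Φ.contR hβ2).measurable β (by linarith) (Φ.hT' hβ2) Φ.Q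
      (Φ.Tw_le hβ2) k (φ - ε / 2) _ (measurableSet_cyl x _) key).trans ?_
  refine (mul_le_mul_right hL _).trans ?_
  rw [← E_add]
  apply E_mono
  linarith

theorem log_tendsto (Φ : Fam c m) {Rp : MarkovShift A → ℝ}
    (hRt : ∀ x, Tendsto (fun β => Φ.R β x) atTop (𝓝 (Rp x))) {c0 : MarkovShift A}
    (hempty : ∀ l z, (∀ j, Rp (shift^[j] z) = 0) → (∀ j, shift^[j] z ∉ cylOf c0 l) → False)
    (x : MarkovShift A) (n : ℕ) :
    Tendsto (fun β => (1 / β) * Real.log (Φ.μ β (cylOf x (n + 1))).toReal) atTop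
      (𝓝 (-sInf (costs Rp c0 x (n + 1)))) := by
  rw [Metric.tendsto_nhds]
  intro ε hε
  filter_upwards [Φ.cyl_ge hRt hempty x n (half_pos hε), Φ.cyl_le hRt hempty x n (half_pos hε),
    eventually_ge_atTop 2] with β h1 h2 hβ
  have hprob := Φ.hprob β hβ
  have hne : Φ.μ β (cylOf x (n + 1)) ≠ 0 := full_support c.hmix (Φ.measR hβ) (Φ.hT' hβ) x n
  have hpos : 0 < (Φ.μ β (cylOf x (n + 1))).toReal :=
    ENNReal.toReal_pos hne (measure_ne_top _ _)
  rw [← ENNReal.ofReal_toReal (measure_ne_top (Φ.μ β) (cylOf x (n + 1))), ← E_log hpos,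
    E_le_iff] at h1 h2
  set ℓ := Real.log (Φ.μ β (cylOf x (n + 1))).toReal
  set φ := sInf (costs Rp c0 x (n + 1))
  have e : β * (1 / β * ℓ) = ℓ := by field_simp
  rw [← e] at h1 h2
  rw [Real.dist_eq, abs_lt]
  have hb : 0 < β := by linarith
  constructor <;> nlinarith

theorem ratio_bound (Φ : Fam c m) {β : ℝ} (hβ : 2 ≤ β) (x : MarkovShift A) (n : ℕ) :
    |(1 / β) * Real.log (Φ.μ β (cylOf (shift x) (n + 1))).toReal
      - (1 / β) * Real.log (Φ.μ β (cylOf x (n + 1 + 1))).toReal - Φ.R β x| ≤ 3 * c.M (n + 1) := by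
  have hprob := Φ.hprob β hβ
  have hv : ∀ y ∈ cylOf x (1 + (n + 1)), |birkhoff (Φ.R β) 1 x - birkhoff (Φ.R β) 1 y|
      ≤ 3 * c.M (n + 1) := fun y hy => Φ.birk_var hβ (by omega) hy
  have hb : 0 < β := by linarith
  have h1 := cyl_lower (Φ.measR hβ) (Φ.hT' hβ) x 1 n (-β * (Φ.R β x + 3 * c.M (n + 1)))
    (fun y hy => by
      rw [birkhoff_const_mul]
      have := abs_le.1 (hv y hy)
      rw [birkhoff_one] at this
      nlinarith)
  have h2 := cyl_upper (Φ.measR hβ) (Φ.hT' hβ) x 1 n (-β * (Φ.R β x - 3 * c.M (n + 1)))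
    (fun y hy => by
      rw [birkhoff_const_mul]
      have := abs_le.1 (hv y hy)
      rw [birkhoff_one] at this
      nlinarith)
  rw [Function.iterate_one, add_comm 1 (n + 1)] at h1 h2
  have hpos : ∀ y j, 0 < (Φ.μ β (cylOf y (j + 1))).toReal := fun y j =>
    ENNReal.toReal_pos (full_support c.hmix (Φ.measR hβ) (Φ.hT' hβ) y j) (measure_ne_top _ _)
  rw [← ENNReal.ofReal_toReal (measure_ne_top (Φ.μ β) (cylOf x (n + 1 + 1))), ← E_log (hpos x _),
    ← ENNReal.ofReal_toReal (measure_ne_top (Φ.μ β) (cylOf (shift x) (n + 1))),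
    ← E_log (hpos (shift x) _), ← E_add, E_le_iff] at h1 h2
  set ℓ := Real.log (Φ.μ β (cylOf x (n + 1 + 1))).toReal
  set ℓ' := Real.log (Φ.μ β (cylOf (shift x) (n + 1))).toReal
  have e : β * (1 / β * ℓ) = ℓ := by field_simp
  have e' : β * (1 / β * ℓ') = ℓ' := by field_simp
  rw [← e, ← e'] at h1 h2
  rw [abs_le]
  constructor <;> nlinarith

end Fam

end MarkovShift

namespace MarkovShift

/-- `lim_n lim_β (1/β) log (μ_β[x₁ … x_n] / μ_β[x₀ … x_n]) = R₊(x)`, where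
`R₊ = -f - V + V∘σ + m(f)` for a bounded calibrated sub-action `V`. -/
theorem double_limit_of_cylinder_ratio
    (A : ℕ → ℕ → Bool)
    (hmix : TopologicallyMixing A)
    (hbip : FinitelyPrimitive A)
    (f : MarkovShift A → ℝ)
    (hWalters : SatisfiesWalters f)
    (hVar1 : Var1Finite f)
    (P : ℝ → ℝ)
    (hPfin : HasGurevichPressure f (P 1))
    (μmax : Measure (MarkovShift A))
    (hmax : IsMaximizing f μmax)
    (huniq : ∀ ν', IsMaximizing f ν' → ν' = μmax)
    (h : ℝ → MarkovShift A → ℝ)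
    (ν : ℝ → Measure (MarkovShift A))
    (hRPF : ∀ β : ℝ, 1 < β → IsRPF (fun x => β * f x) (P β) (h β) (ν β))
    (V : MarkovShift A → ℝ)
    (hV : IsCalibratedSubaction f V) :
    ∀ x : MarkovShift A, ∃ Lf : ℕ → ℝ,
      (∀ n : ℕ, 1 ≤ n → Tendsto
          (fun β : ℝ => (1 / β) * Real.log
            ((((gibbs (h β) (ν β)) (cylOf (shift x) n)).toReal) /
              (((gibbs (h β) (ν β)) (cylOf x (n + 1))).toReal)))
          atTop (𝓝 (Lf n))) ∧
        Tendsto Lf atTop (𝓝 (-f x - V x + V (shift x) + mf f)) := by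
  intro x
  obtain ⟨c⟩ := exists_ctx hmix hbip f hWalters hVar1 (P 1) hPfin x
  obtain ⟨Φ, hΦ⟩ := exists_fam c hV P h ν hRPF
  have hpm : IsProbabilityMeasure μmax := hmax.1.1
  obtain ⟨c0, hc0⟩ := exists_support μmax
  set Rp : MarkovShift A → ℝ := fun x => -f x - V x + V (shift x) + mf f with hRp
  have hRt : ∀ x, Tendsto (fun β => Φ.R β x) atTop (𝓝 (Rp x)) :=
    fun x => Φ.R_tendsto huniq hc0 hV x
  have hempty : ∀ l z, (∀ j, Rp (shift^[j] z) = 0) → (∀ j, shift^[j] z ∉ cylOf c0 l) → False :=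
    fun l z hz hz2 => no_avoid c huniq hc0 hV l z hz hz2
  set Lf : ℕ → ℝ := fun n => -sInf (costs Rp c0 (shift x) n) - -sInf (costs Rp c0 x (n + 1))
    with hLf
  have hsub : ∀ n, Tendsto (fun β => (1 / β) * Real.log (Φ.μ β (cylOf (shift x) (n + 1))).toReal
      - (1 / β) * Real.log (Φ.μ β (cylOf x (n + 1 + 1))).toReal) atTop (𝓝 (Lf (n + 1))) :=
    fun n => (Φ.log_tendsto hRt hempty (shift x) n).sub (Φ.log_tendsto hRt hempty x (n + 1))
  refine ⟨Lf, ?_, ?_⟩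
  · intro n hn
    obtain ⟨n, rfl⟩ : ∃ k, n = k + 1 := ⟨n - 1, by omega⟩
    refine (hsub n).congr' ?_
    filter_upwards [eventually_ge_atTop 2] with β hβ
    have hprob := Φ.hprob β hβ
    have hpos : ∀ y j, 0 < (Φ.μ β (cylOf y (j + 1))).toReal := fun y j =>
      ENNReal.toReal_pos (full_support c.hmix (Φ.measR hβ) (Φ.hT' hβ) y j) (measure_ne_top _ _)
    have e : gibbs (h β) (ν β) = Φ.μ β := by rw [hΦ]
    rw [e, Real.log_div (hpos _ _).ne' (hpos _ _).ne', mul_sub]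
  · have hb : ∀ n, |Lf (n + 1) - Rp x| ≤ 3 * c.M (n + 1) := by
      intro n
      refine le_of_tendsto ((hsub n).sub (hRt x)).abs ?_
      filter_upwards [eventually_ge_atTop 2] with β hβ using Φ.ratio_bound hβ x n
    have hz : Tendsto (fun n => 3 * c.M (n + 1)) atTop (𝓝 0) := by
      have := (c.hMlim.comp (tendsto_add_atTop_nat 1)).const_mul 3
      rwa [mul_zero] at this
    rw [← tendsto_add_atTop_iff_nat 1, tendsto_iff_dist_tendsto_zero]
    refine squeeze_zero (fun _ => dist_nonneg) (fun n => ?_) hz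
    rw [Real.dist_eq]
    exact hb n

end MarkovShift
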